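/- arXiv:2501.12949 — 6 statements merged into one kernel-verified Lean document; each statement's English description precedes it below -/
import Mathlib

section
/- Let d ≥ 0, let D ⊆ ℝ^{1+d} be a compact set, let a < b be real numbers and [a',b'] ⊂ (a,b) a compact subinterval, and let F : (a,b) → ℝ be infinitely differentiable. Let w₀ be a smooth real-valued function on an open neighborhood of D with w₀(D) ⊆ [a',b'], and let (δ_N)_{N≥1} be smooth real-valued functions on that neighborhood such that: (i) there are integers k ≥ 0, j ≥ 0 and a constant K > 0 with N^j·|∂^α δ_N(z)| ≤ K for all N ≥ 1, all z ∈ D and all multi-indices α with |α| ≤ k; and (ii) w_N := w₀ + δ_N takes values in [a',b'] on D for every N ≥ 1. Then for every integer l ≥ 1 there exists K' > 0 such that the remainder R_{l,N} := F∘w_N − Σ_{i=0}^{l−1} (F^{(i)}∘w₀)·δ_N^i/i! satisfies N^{jl}·|∂^α R_{l,N}(z)| ≤ K' for all N ≥ 1, all z ∈ D and all multi-indices α with |α| ≤ k. -/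
/-!
For `R_l F (x, h) = F (x + h) - ∑_{i<l} F^(i)(x) h^i / i!`, differentiating term by term gives
`∂_x (R_l F) = R_l F'` and `∂_h (R_l F) = R_{l-1} F'`, so that
`D (R_l F (u, v)) = R_l F' (u, v) Du + R_{l-1} F' (u, v) Dv`. The power of `v` lost in the second
summand is restored by the factor `Dv`, which obeys the same bounds as `v`. Hence the Leibniz rule
and induction on `k` carry the estimate `|R_l F (x, h)| ≤ C |h|^l` over to all derivatives of order
at most `k`. The constant depends on `u` and `v` only through the sizes of their derivatives at the
point considered, which makes it uniform over compact sets and over families.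
-/

open Set
open scoped Nat Topology

section JetBoundedBy

variable {E G : Type*} [NormedAddCommGroup E] [NormedSpace ℝ E]
  [NormedAddCommGroup G] [NormedSpace ℝ G]

/-- The `C^k` size of `f` at the single point `z` is at most `C`. A family `f_N` is
`O_k(1/N^i)` on `D` when, for some `K`, it satisfies `JetBoundedBy k (f_N) z (K / N^i)` for all
`z ∈ D` and `N ≥ 1`. -/
def JetBoundedBy (k : ℕ) (f : E → G) (z : E) (C : ℝ) : Prop :=
  ∀ p ≤ k, ‖iteratedFDeriv ℝ p f z‖ ≤ C

namespace JetBoundedBy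

variable {k : ℕ} {f g : E → G} {z : E} {A B : ℝ}

theorem mono {m : ℕ} (h : JetBoundedBy k f z A) (hmk : m ≤ k) (hAB : A ≤ B) :
    JetBoundedBy m f z B :=
  fun p hp => (h p (hp.trans hmk)).trans hAB

theorem norm_le (h : JetBoundedBy k f z A) : ‖f z‖ ≤ A := by
  simpa using h 0 k.zero_le

theorem nonneg (h : JetBoundedBy k f z A) : 0 ≤ A :=
  (norm_nonneg _).trans h.norm_le

theorem congr (h : JetBoundedBy k f z A) (hfg : f =ᶠ[𝓝 z] g) : JetBoundedBy k g z A :=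
  fun p hp => (hfg.iteratedFDeriv ℝ p).eq_of_nhds ▸ h p hp

theorem add (hf : JetBoundedBy k f z A) (hg : JetBoundedBy k g z B)
    (hf' : ContDiffAt ℝ k f z) (hg' : ContDiffAt ℝ k g z) :
    JetBoundedBy k (fun y => f y + g y) z (A + B) := by
  intro p hp
  have hpk : (p : WithTop ℕ∞) ≤ k := mod_cast hp
  rw [fun_iteratedFDeriv_add_apply (hf'.of_le hpk) (hg'.of_le hpk)]
  exact norm_add_le_of_le (hf p hp) (hg p hp)

end JetBoundedBy

theorem jetBoundedBy_zero_iff {f : E → G} {z : E} {A : ℝ} : JetBoundedBy 0 f z A ↔ ‖f z‖ ≤ A := by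
  simp [JetBoundedBy]

theorem jetBoundedBy_succ_iff {k : ℕ} {f : E → G} {z : E} {A : ℝ} :
    JetBoundedBy (k + 1) f z A ↔ ‖f z‖ ≤ A ∧ JetBoundedBy k (fderiv ℝ f) z A := by
  refine ⟨fun h => ⟨h.norm_le, fun p hp => ?_⟩, fun ⟨h₀, h⟩ p hp => ?_⟩
  · rw [norm_iteratedFDeriv_fderiv]
    exact h (p + 1) (by lia)
  · cases p with
    | zero => simpa using h₀
    | succ p =>
      rw [← norm_iteratedFDeriv_fderiv]
      exact h p (by lia)

section Bilinear

variable {G₁ G₂ : Type*} [NormedAddCommGroup G₁] [NormedSpace ℝ G₁]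
  [NormedAddCommGroup G₂] [NormedSpace ℝ G₂]

theorem norm_iteratedFDeriv_le_of_bilinear_of_contDiffAt
    (L : G₁ →L[ℝ] G₂ →L[ℝ] G) (hL : ‖L‖ ≤ 1) {f : E → G₁} {g : E → G₂} {z : E} {p : ℕ}
    (hf : ContDiffAt ℝ p f z) (hg : ContDiffAt ℝ p g z) :
    ‖iteratedFDeriv ℝ p (fun y => L (f y) (g y)) z‖ ≤ ∑ i ∈ Finset.range (p + 1),
      (p.choose i : ℝ) * ‖iteratedFDeriv ℝ i f z‖ * ‖iteratedFDeriv ℝ (p - i) g z‖ := by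
  obtain ⟨V, hV, hVo, hzV⟩ := eventually_nhds_iff.1
    ((hf.eventually (by simp)).and (hg.eventually (by simp)))
  have h := L.norm_iteratedFDerivWithin_le_of_bilinear_of_le_one
    (fun y hy => (hV y hy).1.contDiffWithinAt) (fun y hy => (hV y hy).2.contDiffWithinAt)
    hVo.uniqueDiffOn hzV le_rfl hL
  simpa only [iteratedFDerivWithin_of_isOpen _ hVo hzV] using h

theorem JetBoundedBy.bilinear
    (L : G₁ →L[ℝ] G₂ →L[ℝ] G) (hL : ‖L‖ ≤ 1) {k : ℕ} {f : E → G₁} {g : E → G₂} {z : E} {A B : ℝ}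
    (hf : JetBoundedBy k f z A) (hg : JetBoundedBy k g z B)
    (hf' : ContDiffAt ℝ k f z) (hg' : ContDiffAt ℝ k g z) :
    JetBoundedBy k (fun y => L (f y) (g y)) z (2 ^ k * (A * B)) := by
  intro p hp
  have hpk : (p : WithTop ℕ∞) ≤ k := mod_cast hp
  have hA := hf.nonneg
  have hB := hg.nonneg
  calc ‖iteratedFDeriv ℝ p (fun y => L (f y) (g y)) z‖
      ≤ ∑ i ∈ Finset.range (p + 1),
          (p.choose i : ℝ) * ‖iteratedFDeriv ℝ i f z‖ * ‖iteratedFDeriv ℝ (p - i) g z‖ :=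
        norm_iteratedFDeriv_le_of_bilinear_of_contDiffAt L hL (hf'.of_le hpk) (hg'.of_le hpk)
    _ ≤ ∑ i ∈ Finset.range (p + 1), (p.choose i : ℝ) * A * B := by
        gcongr with i hi
        · exact hf i (by grind)
        · exact hg (p - i) (by lia)
    _ = 2 ^ p * (A * B) := by
        simp_rw [mul_assoc, ← Finset.sum_mul]
        exact_mod_cast congrArg (· * (A * B)) (congrArg Nat.cast (Nat.sum_range_choose p))
    _ ≤ 2 ^ k * (A * B) := by gcongr; norm_num

end Bilinear

theorem exists_jetBoundedBy_of_isCompact {D : Set E} (hD : IsCompact D) {k : ℕ} {f : E → G}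
    (hf : ∀ z ∈ D, ContDiffAt ℝ k f z) : ∃ C, ∀ z ∈ D, JetBoundedBy k f z C := by
  have bound (p : ℕ) (hp : p ≤ k) : ∃ C, ∀ z ∈ D, ‖iteratedFDeriv ℝ p f z‖ ≤ C :=
    hD.exists_bound_of_continuousOn fun z hz =>
      ((hf z hz).continuousAt_iteratedFDeriv (mod_cast hp)).continuousWithinAt
  choose! C hC using bound
  refine ⟨(Finset.range (k + 1)).sup' Finset.nonempty_range_add_one C, fun z hz p hp => ?_⟩
  exact (hC p hp z hz).trans (Finset.le_sup' C (Finset.mem_range_succ_iff.2 hp))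

end JetBoundedBy

section TaylorRemainder

variable {E G : Type*} [NormedAddCommGroup E] [NormedSpace ℝ E]
  [NormedAddCommGroup G] [NormedSpace ℝ G]

/-- The Taylor sum `∑_{i<l} F^{(i)}(x) h^i / i!` with `l` terms, that is, of degree `l - 1`. -/
noncomputable def taylorSum (F : ℝ → G) (l : ℕ) (x h : ℝ) : G :=
  ∑ i ∈ Finset.range l, (h ^ i / i !) • iteratedDeriv i F x

/-- The remainder `F(x + h) - ∑_{i<l} F^{(i)}(x) h^i / i!`, of order `h^l` as `h → 0`. -/
noncomputable def taylorRemainder (F : ℝ → G) (l : ℕ) (x h : ℝ) : G :=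
  F (x + h) - taylorSum F l x h

theorem taylorSum_succ (F : ℝ → G) (l : ℕ) (x h : ℝ) :
    taylorSum F (l + 1) x h = taylorSum F l x h + (h ^ l / l !) • iteratedDeriv l F x :=
  Finset.sum_range_succ _ l

theorem taylorRemainder_succ_zero (F : ℝ → G) (l : ℕ) (x : ℝ) :
    taylorRemainder F (l + 1) x 0 = 0 := by
  simp [taylorRemainder, taylorSum, Finset.sum_range_succ']

theorem contDiffAt_iteratedDeriv {F : ℝ → G} {x : ℝ} {m i : ℕ}
    (hF : ContDiffAt ℝ (m + i : ℕ) F x) : ContDiffAt ℝ m (iteratedDeriv i F) x := by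
  rw [iteratedDeriv_eq_equiv_comp]
  exact (LinearIsometryEquiv.contDiff _).contDiffAt.comp x
    (hF.iteratedFDeriv_right (mod_cast le_rfl))

theorem contDiffAt_deriv {F : ℝ → G} {x : ℝ} {m : ℕ} (hF : ContDiffAt ℝ (m + 1 : ℕ) F x) :
    ContDiffAt ℝ m (deriv F) x := by
  simpa only [iteratedDeriv_one] using contDiffAt_iteratedDeriv hF

theorem contDiffAt_taylorRemainder {F : ℝ → G} {u v : E → ℝ} {z : E} {k l : ℕ}
    (hFu : ContDiffAt ℝ (k + l : ℕ) F (u z)) (hFuv : ContDiffAt ℝ k F (u z + v z))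
    (hu : ContDiffAt ℝ k u z) (hv : ContDiffAt ℝ k v z) :
    ContDiffAt ℝ k (fun y => taylorRemainder F l (u y) (v y)) z := by
  refine (hFuv.comp z (hu.add hv)).sub (ContDiffAt.sum fun i hi => ?_)
  have hil : i ≤ l := (Finset.mem_range.1 hi).le
  have hFi : ContDiffAt ℝ k (iteratedDeriv i F) (u z) :=
    contDiffAt_iteratedDeriv (hFu.of_le (by gcongr))
  exact ((hv.pow i).div_const _).smul (hFi.comp z hu)

section Derivative

variable {F : ℝ → G} {u v : E → ℝ} {u' v' : E →L[ℝ] ℝ} {y : E} {l : ℕ}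

theorem hasFDerivAt_pow_succ_div_factorial (hv : HasFDerivAt v v' y) (m : ℕ) :
    HasFDerivAt (fun y => v y ^ (m + 1) / (m + 1)!) ((v y ^ m / m !) • v') y := by
  simp only [div_eq_mul_inv]
  refine ((hv.pow (m + 1)).mul_const ((m + 1)! : ℝ)⁻¹).congr_fderiv ?_
  rw [Nat.factorial_succ, Nat.add_sub_cancel]
  ext e
  simp only [smul_apply, smul_eq_mul, nsmul_eq_mul, Nat.cast_mul]
  field_simp

-- Differentiating `v ^ i / i!` lowers `i` and kills `i = 0`: hence `l - 1`, even for `l = 0`.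
theorem hasFDerivAt_taylorSum (hF : ContDiffAt ℝ l F (u y))
    (hu : HasFDerivAt u u' y) (hv : HasFDerivAt v v' y) :
    HasFDerivAt (fun y => taylorSum F l (u y) (v y))
      (u'.smulRight (taylorSum (deriv F) l (u y) (v y)) +
        v'.smulRight (taylorSum (deriv F) (l - 1) (u y) (v y))) y := by
  induction l with
  | zero => simpa [taylorSum] using hasFDerivAt_const (0 : G) y
  | succ l ih =>
    have hFl : HasDerivAt (iteratedDeriv l F) (iteratedDeriv l (deriv F) (u y)) (u y) := by
      rw [← iteratedDeriv_succ', iteratedDeriv_succ]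
      exact ((contDiffAt_iteratedDeriv (m := 1) (by rwa [add_comm])).differentiableAt
        (by simp)).hasDerivAt
    have hFlu := hFl.hasFDerivAt.comp y hu
    cases l with
    | zero => simpa [taylorSum] using! hFlu
    | succ m =>
      have hterm := (hasFDerivAt_pow_succ_div_factorial hv m).smul hFlu
      simp only [taylorSum_succ _ (m + 1)]
      refine ((ih (hF.of_le (by simp))).add hterm).congr_fderiv ?_
      ext e
      simp only [Nat.add_sub_cancel, taylorSum_succ _ m, iteratedDeriv_succ', Function.comp_apply,
        add_apply, smul_apply, ContinuousLinearMap.comp_apply, smul_eq_mul,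
        ContinuousLinearMap.toSpanSingleton_apply, ContinuousLinearMap.smulRight_apply]
      module

theorem hasFDerivAt_taylorRemainder (hFu : ContDiffAt ℝ l F (u y))
    (hFuv : DifferentiableAt ℝ F (u y + v y))
    (hu : HasFDerivAt u u' y) (hv : HasFDerivAt v v' y) :
    HasFDerivAt (fun y => taylorRemainder F l (u y) (v y))
      (u'.smulRight (taylorRemainder (deriv F) l (u y) (v y)) +
        v'.smulRight (taylorRemainder (deriv F) (l - 1) (u y) (v y))) y := by
  have hcomp := hFuv.hasDerivAt.hasFDerivAt.comp y (hu.add hv)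
  refine (hcomp.sub (hasFDerivAt_taylorSum hFu hu hv)).congr_fderiv ?_
  ext e
  simp only [taylorRemainder, ContinuousLinearMap.comp_apply, sub_apply, add_apply,
    ContinuousLinearMap.toSpanSingleton_apply, ContinuousLinearMap.smulRight_apply]
  module

theorem hasDerivAt_taylorRemainder_succ {x h : ℝ} (hFx : ContDiffAt ℝ (l + 1 : ℕ) F x)
    (hFxh : DifferentiableAt ℝ F (x + h)) :
    HasDerivAt (taylorRemainder F (l + 1) x) (taylorRemainder (deriv F) l x h) h := by
  simpa using (hasFDerivAt_taylorRemainder hFx hFxh (hasFDerivAt_const x h)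
    (hasFDerivAt_id h)).hasDerivAt

end Derivative

theorem exists_norm_taylorRemainder_le {J : Set ℝ} (hJ : IsCompact J) (hJc : J.OrdConnected)
    (l : ℕ) {F : ℝ → G} (hF : ∀ x ∈ J, ContDiffAt ℝ l F x) :
    ∃ C ≥ 0, ∀ x h, x ∈ J → x + h ∈ J → ‖taylorRemainder F l x h‖ ≤ C * |h| ^ l := by
  induction l generalizing F with
  | zero =>
    obtain ⟨C, hC⟩ := hJ.exists_bound_of_continuousOn
      fun x hx => (hF x hx).continuousAt.continuousWithinAt
    exact ⟨max C 0, le_max_right _ _, fun x h _ hxh => by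
      simpa [taylorRemainder, taylorSum] using Or.inl (hC _ hxh)⟩
  | succ l ih =>
    obtain ⟨C, hC₀, hC⟩ := ih fun x hx => contDiffAt_deriv (hF x hx)
    refine ⟨C, hC₀, fun x h hx hxh => ?_⟩
    have hmem (t : ℝ) (ht : t ∈ uIcc 0 h) : x + t ∈ J :=
      hJc.uIcc_subset hx hxh (by simpa [add_comm] using mem_image_of_mem (x + ·) ht)
    have hderiv (t : ℝ) (ht : t ∈ uIcc 0 h) : HasDerivWithinAt (taylorRemainder F (l + 1) x)
        (taylorRemainder (deriv F) l x t) (uIcc 0 h) t :=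
      (hasDerivAt_taylorRemainder_succ (hF x hx)
        ((hF _ (hmem t ht)).differentiableAt (by simp))).hasDerivWithinAt
    have hbound (t : ℝ) (ht : t ∈ uIcc 0 h) : ‖taylorRemainder (deriv F) l x t‖ ≤ C * |h| ^ l := by
      have hth : |t| ≤ |h| := by simpa using abs_sub_left_of_mem_uIcc ht
      exact (hC x t hx (hmem t ht)).trans (by gcongr)
    calc ‖taylorRemainder F (l + 1) x h‖
        = ‖taylorRemainder F (l + 1) x h - taylorRemainder F (l + 1) x 0‖ := by
          rw [taylorRemainder_succ_zero, sub_zero]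
      _ ≤ C * |h| ^ l * ‖h - 0‖ := (convex_uIcc 0 h).norm_image_sub_le_of_norm_hasDerivWithin_le
          hderiv hbound left_mem_uIcc right_mem_uIcc
      _ = C * |h| ^ (l + 1) := by rw [sub_zero, Real.norm_eq_abs, pow_succ, mul_assoc]

theorem fderiv_taylorRemainder_eventuallyEq {F : ℝ → G} {u v : E → ℝ} {z : E} {l : ℕ}
    (hFu : ContDiffAt ℝ l F (u z)) (hFuv : ContDiffAt ℝ 1 F (u z + v z))
    (hu : ContDiffAt ℝ 1 u z) (hv : ContDiffAt ℝ 1 v z) :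
    fderiv ℝ (fun y => taylorRemainder F l (u y) (v y)) =ᶠ[𝓝 z] fun y =>
      (fderiv ℝ u y).smulRight (taylorRemainder (deriv F) l (u y) (v y)) +
        (fderiv ℝ v y).smulRight (taylorRemainder (deriv F) (l - 1) (u y) (v y)) := by
  filter_upwards [hu.eventually (by simp), hv.eventually (by simp),
    hu.continuousAt.eventually (hFu.eventually (by simp)),
    (hu.continuousAt.add hv.continuousAt).eventually (hFuv.eventually (by simp))]
    with y huy hvy hFuy hFuvy
  exact (hasFDerivAt_taylorRemainder hFuy (hFuvy.differentiableAt one_ne_zero)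
    (huy.differentiableAt one_ne_zero).hasFDerivAt
    (hvy.differentiableAt one_ne_zero).hasFDerivAt).fderiv

theorem jetBoundedBy_succ_taylorRemainder {F : ℝ → G} {u v : E → ℝ} {z : E} {k l : ℕ}
    {B ε A₀ A₁ A₂ : ℝ} (hFu : ContDiffAt ℝ (k + 1 + l : ℕ) F (u z))
    (hFuv : ContDiffAt ℝ (k + 1 : ℕ) F (u z + v z))
    (hu : ContDiffAt ℝ (k + 1 : ℕ) u z) (hv : ContDiffAt ℝ (k + 1 : ℕ) v z)
    (huB : JetBoundedBy (k + 1) u z B) (hvε : JetBoundedBy (k + 1) v z ε)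
    (h₀ : ‖taylorRemainder F l (u z) (v z)‖ ≤ A₀)
    (h₁ : JetBoundedBy k (fun y => taylorRemainder (deriv F) l (u y) (v y)) z A₁)
    (h₂ : JetBoundedBy k (fun y => taylorRemainder (deriv F) (l - 1) (u y) (v y)) z A₂) :
    JetBoundedBy (k + 1) (fun y => taylorRemainder F l (u y) (v y)) z
      (A₀ + (2 ^ k * (B * A₁) + 2 ^ k * (ε * A₂))) := by
  have hA₀ : 0 ≤ A₀ := (norm_nonneg _).trans h₀
  have hu' : ContDiffAt ℝ k (fderiv ℝ u) z := hu.fderiv_right (mod_cast le_rfl)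
  have hv' : ContDiffAt ℝ k (fderiv ℝ v) z := hv.fderiv_right (mod_cast le_rfl)
  have hR (m : ℕ) (hm : m ≤ l) :
      ContDiffAt ℝ k (fun y => taylorRemainder (deriv F) m (u y) (v y)) z :=
    contDiffAt_taylorRemainder
      (contDiffAt_deriv (hFu.of_le (mod_cast (by lia : k + m + 1 ≤ k + 1 + l))))
      (contDiffAt_deriv hFuv) (hu.of_le (by simp)) (hv.of_le (by simp))
  have hsmulRight := ContinuousLinearMap.norm_smulRightL_le (𝕜 := ℝ) (E := E) (Fₗ := G)
  have hu₁ := (jetBoundedBy_succ_iff.1 huB).2.bilinear _ hsmulRight h₁ hu' (hR l le_rfl)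
  have hv₂ := (jetBoundedBy_succ_iff.1 hvε).2.bilinear _ hsmulRight h₂ hv' (hR (l - 1) (by lia))
  have hsum := hu₁.add hv₂ (hu'.smulRight (hR l le_rfl)) (hv'.smulRight (hR (l - 1) (by lia)))
  have hfderiv := hsum.congr (fderiv_taylorRemainder_eventuallyEq (hFu.of_le (by simp))
    (hFuv.of_le (by simp)) (hu.of_le (by simp)) (hv.of_le (by simp))).symm
  exact jetBoundedBy_succ_iff.2
    ⟨h₀.trans (le_add_of_nonneg_right hsum.nonneg), hfderiv.mono le_rfl (le_add_of_nonneg_left hA₀)⟩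

theorem mul_pow_pred_le_mul_pow {B ε : ℝ} (hB : 1 ≤ B) (hε : 0 ≤ ε) (hεB : ε ≤ B) (l : ℕ) :
    ε * ε ^ (l - 1) ≤ B * ε ^ l := by
  cases l with
  | zero => simpa using hεB
  | succ l => simpa [pow_succ'] using le_mul_of_one_le_left (by positivity) hB

theorem exists_jetBoundedBy_taylorRemainder {J : Set ℝ} (hJ : IsCompact J) (hJc : J.OrdConnected)
    {B : ℝ} (hB : 1 ≤ B) (k l : ℕ) {F : ℝ → G} (hF : ∀ x ∈ J, ContDiffAt ℝ (k + l : ℕ) F x) :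
    ∃ C ≥ 0, ∀ (u v : E → ℝ) (z : E) (ε : ℝ), ContDiffAt ℝ k u z → ContDiffAt ℝ k v z →
      u z ∈ J → u z + v z ∈ J → JetBoundedBy k u z B → JetBoundedBy k v z ε → ε ≤ B →
      JetBoundedBy k (fun y => taylorRemainder F l (u y) (v y)) z (C * ε ^ l) := by
  induction k generalizing F l with
  | zero =>
    obtain ⟨C, hC, hbound⟩ := exists_norm_taylorRemainder_le hJ hJc l (by simpa using hF)
    refine ⟨C, hC, fun u v z ε _ _ huz huvz _ hvε _ => jetBoundedBy_zero_iff.2 ?_⟩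
    exact (hbound _ _ huz huvz).trans (by have : |v z| ≤ ε := hvε.norm_le; gcongr)
  | succ k ih =>
    have hF' (m : ℕ) (hm : m ≤ l) : ∀ x ∈ J, ContDiffAt ℝ (k + m : ℕ) (deriv F) x := fun x hx =>
      contDiffAt_deriv ((hF x hx).of_le (mod_cast (by lia : k + m + 1 ≤ k + 1 + l)))
    obtain ⟨C₀, hC₀, h₀⟩ := exists_norm_taylorRemainder_le hJ hJc l
      fun x hx => (hF x hx).of_le (by simp)
    obtain ⟨C₁, hC₁, h₁⟩ := ih l (hF' l le_rfl)
    obtain ⟨C₂, hC₂, h₂⟩ := ih (l - 1) (hF' (l - 1) (by lia))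
    refine ⟨C₀ + (2 ^ k * (B * C₁) + 2 ^ k * (B * C₂)), by positivity,
      fun u v z ε hu hv huz huvz huB hvε hεB => ?_⟩
    have hε : 0 ≤ ε := hvε.nonneg
    have hεl := mul_pow_pred_le_mul_pow hB hε hεB l
    have hR₀ : ‖taylorRemainder F l (u z) (v z)‖ ≤ C₀ * ε ^ l :=
      (h₀ _ _ huz huvz).trans (by have : |v z| ≤ ε := hvε.norm_le; gcongr)
    have huk := hu.of_le (mod_cast k.le_succ : (k : WithTop ℕ∞) ≤ (k + 1 : ℕ))
    have hvk := hv.of_le (mod_cast k.le_succ : (k : WithTop ℕ∞) ≤ (k + 1 : ℕ))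
    have huBk := huB.mono k.le_succ le_rfl
    have hvεk := hvε.mono k.le_succ le_rfl
    have hR₁ := h₁ u v z ε huk hvk huz huvz huBk hvεk hεB
    have hR₂ := h₂ u v z ε huk hvk huz huvz huBk hvεk hεB
    refine (jetBoundedBy_succ_taylorRemainder (hF _ huz) ((hF _ huvz).of_le (by simp)) hu hv huB hvε
      hR₀ hR₁ hR₂).mono le_rfl ?_
    calc C₀ * ε ^ l + (2 ^ k * (B * (C₁ * ε ^ l)) + 2 ^ k * (ε * (C₂ * ε ^ (l - 1))))
        = C₀ * ε ^ l + (2 ^ k * (B * (C₁ * ε ^ l)) + 2 ^ k * C₂ * (ε * ε ^ (l - 1))) := by ring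
      _ ≤ C₀ * ε ^ l + (2 ^ k * (B * (C₁ * ε ^ l)) + 2 ^ k * C₂ * (B * ε ^ l)) := by gcongr
      _ = (C₀ + (2 ^ k * (B * C₁) + 2 ^ k * (B * C₂))) * ε ^ l := by ring

theorem taylor_remainder_order_general {D : Set E} (hD : IsCompact D) {J : Set ℝ}
    (hJ : IsCompact J) (hJc : J.OrdConnected) {k l : ℕ} {F : ℝ → G}
    (hF : ∀ x ∈ J, ContDiffAt ℝ (k + l : ℕ) F x)
    {w₀ : E → ℝ} (hw₀ : ∀ z ∈ D, ContDiffAt ℝ k w₀ z) (hw₀D : ∀ z ∈ D, w₀ z ∈ J)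
    {δ : ℕ → E → ℝ} (hδ : ∀ N : ℕ, 1 ≤ N → ∀ z ∈ D, ContDiffAt ℝ k (δ N) z) {j : ℕ} {K : ℝ}
    (hδO : ∀ N : ℕ, 1 ≤ N → ∀ z ∈ D, ∀ p ≤ k, (N : ℝ) ^ j * ‖iteratedFDeriv ℝ p (δ N) z‖ ≤ K)
    (hwD : ∀ N : ℕ, 1 ≤ N → ∀ z ∈ D, w₀ z + δ N z ∈ J) :
    ∃ K' > (0 : ℝ), ∀ N : ℕ, 1 ≤ N → ∀ z ∈ D, ∀ p ≤ k,
      (N : ℝ) ^ (j * l) * ‖iteratedFDeriv ℝ p (fun y => F (w₀ y + δ N y) -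
        ∑ i ∈ Finset.range l, (δ N y ^ i / i !) • iteratedDeriv i F (w₀ y)) z‖ ≤ K' := by
  obtain ⟨B₀, hB₀⟩ := exists_jetBoundedBy_of_isCompact hD hw₀
  obtain ⟨C, -, hC⟩ := exists_jetBoundedBy_taylorRemainder (E := E) hJ hJc
    (le_max_left 1 (max B₀ K)) k l hF
  refine ⟨max (C * K ^ l) 1, by positivity, fun N hN z hz p hp => le_max_of_le_left ?_⟩
  have hNj : 1 ≤ (N : ℝ) ^ j := one_le_pow₀ (mod_cast hN)
  have hδN : JetBoundedBy k (δ N) z (K / N ^ j) := fun q hq =>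
    (le_div_iff₀' (by positivity)).2 (hδO N hN z hz q hq)
  have hK : 0 ≤ K := le_trans (by positivity) (hδO N hN z hz 0 k.zero_le)
  have hR := hC w₀ (δ N) z _ (hw₀ z hz) (hδ N hN z hz) (hw₀D z hz) (hwD N hN z hz)
    ((hB₀ z hz).mono le_rfl (by simp)) hδN ((div_le_self hK hNj).trans (by simp)) p hp
  calc (N : ℝ) ^ (j * l) * _ ≤ (N : ℝ) ^ (j * l) * (C * (K / N ^ j) ^ l) := by gcongr; exact hR
    _ = C * K ^ l := by
        rw [pow_mul, div_pow]
        field_simp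

end TaylorRemainder

/-- Taylor expansion with remainder for orders, paper Lemma 2.3.
If `δ_N` is `O_k(1/N^j)` on the compact set `D` and `w_N = w₀ + δ_N` takes values in
`[a',b'] ⊂ (a,b)` where the smooth function `F` is defined, then for every `l ≥ 1` the
Taylor remainder `R_{l,N} = F ∘ w_N - ∑_{i<l} (F^{(i)} ∘ w₀) δ_N^i / i!` is `O_k(1/N^{jl})`
on `D`. Bounds on all partial derivatives of multi-index `α` with `|α| ≤ k` are formalized
as bounds on the iterated (Fréchet) derivatives of order `≤ k`. -/
theorem taylor_remainder_order
    (d : ℕ) (D : Set (Fin (d + 1) → ℝ)) (hD : IsCompact D)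
    (a b a' b' : ℝ) (hab : a < b) (haa' : a < a') (ha'b' : a' ≤ b') (hb'b : b' < b)
    (F : ℝ → ℝ) (hF : ContDiffOn ℝ (⊤ : ℕ∞) F (Set.Ioo a b))
    (U : Set (Fin (d + 1) → ℝ)) (hU : IsOpen U) (hDU : D ⊆ U)
    (w₀ : (Fin (d + 1) → ℝ) → ℝ) (hw₀ : ContDiffOn ℝ (⊤ : ℕ∞) w₀ U)
    (hw₀D : ∀ z ∈ D, w₀ z ∈ Set.Icc a' b')
    (δ : ℕ → (Fin (d + 1) → ℝ) → ℝ)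
    (hδ : ∀ N : ℕ, 1 ≤ N → ContDiffOn ℝ (⊤ : ℕ∞) (δ N) U)
    (k j : ℕ) (K : ℝ) (hK : 0 < K)
    (hδO : ∀ N : ℕ, 1 ≤ N → ∀ z ∈ D, ∀ p ≤ k,
      (N : ℝ) ^ j * ‖iteratedFDeriv ℝ p (δ N) z‖ ≤ K)
    (hwD : ∀ N : ℕ, 1 ≤ N → ∀ z ∈ D, w₀ z + δ N z ∈ Set.Icc a' b') :
    ∀ l : ℕ, 1 ≤ l → ∃ K' > (0 : ℝ), ∀ N : ℕ, 1 ≤ N → ∀ z ∈ D, ∀ p ≤ k,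
      (N : ℝ) ^ (j * l) *
        ‖iteratedFDeriv ℝ p
          (fun y => F (w₀ y + δ N y) -
            ∑ i ∈ Finset.range l,
              iteratedDeriv i F (w₀ y) * (δ N y) ^ i / (Nat.factorial i)) z‖ ≤ K' := by
  intro l _
  have hIcc : Set.Icc a' b' ⊆ Set.Ioo a b := Set.Icc_subset_Ioo haa' hb'b
  simpa only [smul_eq_mul, mul_comm (_ / _), ← mul_div_assoc] using
    taylor_remainder_order_general (l := l) hD isCompact_Icc Set.ordConnected_Icc
      (fun x hx => (hF.contDiffAt (isOpen_Ioo.mem_nhds (hIcc hx))).of_le (mod_cast le_top))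
      (fun z hz => (hw₀.contDiffAt (hU.mem_nhds (hDU hz))).of_le (mod_cast le_top)) hw₀D
      (fun N hN z hz => ((hδ N hN).contDiffAt (hU.mem_nhds (hDU hz))).of_le (mod_cast le_top))
      hδO hwD
end

section
/- Let T > 0 and 0 < δ with 4δ < T, let X be a nonempty set, and let C > 0. For each N ≥ 1 let g_N : [δ, T−δ] × X → ℝ be a function such that for every x ∈ X the map τ ↦ g_N(τ,x) is differentiable on [δ, T−δ], and suppose that for all N ≥ 1, all τ ∈ [δ, T−δ] and all x ∈ X: |g_N(τ,x) − √τ| ≤ C/N and |∂_τ g_N(τ,x) − 1/(2√τ)| ≤ C/N. Then there exist N₀ ≥ 1 and a constant C' > 0 (depending only on C, δ and T) such that for every N ≥ N₀, every λ ∈ [2δ, T−2δ] and every x ∈ X, there is a unique φ ∈ [δ, T−δ] with g_N(φ, x) = √λ, and this φ satisfies |φ − λ| ≤ C'/N. -/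
/-!
On `[0, b]` the square root separates points at least as much as the linear map of slope
`1 / (2√b)`, i.e. `2√b √t - t` is monotone. Hence a function within `ε` of `√` takes the value
`√λ` only at points within `2√b ε` of `λ`, and, if continuous, it takes this value as soon as
`λ` is that far from both endpoints. A derivative within `ε < 1 / (2√b)` of that of `√` is
positive, which gives uniqueness. In the theorem `ε = C / N`.
-/

open Set Filter

section Approximation

variable {f h : ℝ → ℝ} {s : Set ℝ} {K ε a b x y lam : ℝ}

theorem abs_sub_le_mul_abs_sub_of_monotoneOn (hK : 0 ≤ K)
    (hh : MonotoneOn (fun t => K * h t - t) s) (hx : x ∈ s) (hy : y ∈ s) :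
    |x - y| ≤ K * |h x - h y| := by
  wlog hxy : x ≤ y generalizing x y
  · simpa only [abs_sub_comm] using this hy hx (le_of_not_ge hxy)
  calc |x - y| = y - x := by rw [abs_sub_comm, abs_of_nonneg (sub_nonneg.2 hxy)]
    _ ≤ K * (h y - h x) := by linarith [hh hx hy hxy]
    _ ≤ K * |h x - h y| := by
      rw [abs_sub_comm]
      gcongr
      exact le_abs_self _

theorem add_le_of_monotoneOn_mul_sub (hK : 0 < K) (hh : MonotoneOn (fun t => K * h t - t) s)
    (hx : x ∈ s) (hy : y ∈ s) (hxy : x ≤ y) (hε : x + K * ε ≤ y) : h x + ε ≤ h y :=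
  le_of_mul_le_mul_left (by linarith [hh hx hy hxy]) hK

theorem exists_mem_Icc_eq_of_abs_sub_le (hK : 0 < K) (hab : a ≤ b)
    (hh : MonotoneOn (fun t => K * h t - t) (Icc a b)) (hf : ContinuousOn f (Icc a b))
    (hfh : ∀ t ∈ Icc a b, |f t - h t| ≤ ε) (hlam : lam ∈ Icc (a + K * ε) (b - K * ε)) :
    ∃ t ∈ Icc a b, f t = h lam := by
  have ha : a ∈ Icc a b := left_mem_Icc.2 hab
  have hb : b ∈ Icc a b := right_mem_Icc.2 hab
  have hKε : 0 ≤ K * ε := mul_nonneg hK.le ((abs_nonneg _).trans (hfh a ha))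
  have hlam_mem : lam ∈ Icc a b := ⟨by linarith [hlam.1], by linarith [hlam.2]⟩
  have h_left : h a + ε ≤ h lam :=
    add_le_of_monotoneOn_mul_sub hK hh ha hlam_mem hlam_mem.1 hlam.1
  have h_right : h lam + ε ≤ h b :=
    add_le_of_monotoneOn_mul_sub hK hh hlam_mem hb hlam_mem.2 (by linarith [hlam.2])
  have hfa : f a ≤ h lam := by linarith [(abs_le.1 (hfh a ha)).2]
  have hfb : h lam ≤ f b := by linarith [(abs_le.1 (hfh b hb)).1]
  exact intermediate_value_Icc hab hf ⟨hfa, hfb⟩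

end Approximation

section Sqrt

variable {f f' : ℝ → ℝ} {ε a b lam : ℝ}

theorem monotoneOn_two_mul_sqrt_mul_sqrt_sub (b : ℝ) :
    MonotoneOn (fun t => 2 * √b * √t - t) (Icc 0 b) := by
  intro x hx y hy hxy
  have h_diff : y - x ≤ 2 * √b * (√y - √x) :=
    calc y - x = (√y + √x) * (√y - √x) := by
          rw [← sq_sub_sq, Real.sq_sqrt hy.1, Real.sq_sqrt hx.1]
      _ ≤ 2 * √b * (√y - √x) :=
        mul_le_mul_of_nonneg_right
          (by linarith [Real.sqrt_le_sqrt hx.2, Real.sqrt_le_sqrt hy.2])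
          (sub_nonneg.2 (Real.sqrt_le_sqrt hxy))
  linarith

theorem abs_sub_le_two_mul_sqrt_mul_abs_sqrt_sub_sqrt {x y : ℝ} (hx : x ∈ Icc 0 b)
    (hy : y ∈ Icc 0 b) : |x - y| ≤ 2 * √b * |√x - √y| :=
  abs_sub_le_mul_abs_sub_of_monotoneOn (by positivity)
    (monotoneOn_two_mul_sqrt_mul_sqrt_sub b) hx hy

theorem strictMonoOn_of_abs_deriv_sub_deriv_sqrt_le (ha : 0 ≤ a) (hε : 2 * √b * ε < 1)
    (hf : ContinuousOn f (Icc a b)) (hderiv : ∀ t ∈ Ioo a b, HasDerivAt f (f' t) t)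
    (hf' : ∀ t ∈ Ioo a b, |f' t - 1 / (2 * √t)| ≤ ε) :
    StrictMonoOn f (Icc a b) := by
  refine strictMonoOn_of_hasDerivWithinAt_pos (convex_Icc a b) hf
    (fun t ht => (hderiv t (interior_Icc.subset ht)).hasDerivWithinAt) fun t ht => ?_
  rw [interior_Icc] at ht
  have ht_pos : 0 < √t := Real.sqrt_pos.2 (ha.trans_lt ht.1)
  have h_sqrt : √t ≤ √b := Real.sqrt_le_sqrt ht.2.le
  have h_slope : ε < 1 / (2 * √t) :=
    calc ε < 1 / (2 * √b) := by
          rw [lt_div_iff₀ (by linarith), mul_comm]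
          exact hε
      _ ≤ 1 / (2 * √t) := by gcongr
  linarith [(abs_le.1 (hf' t ht)).1]

theorem existsUnique_eq_sqrt_of_abs_sub_sqrt_le (ha : 0 ≤ a) (hab : a < b)
    (hε : 2 * √b * ε < 1)
    (hf : ContinuousOn f (Icc a b)) (hderiv : ∀ t ∈ Ioo a b, HasDerivAt f (f' t) t)
    (hf_sqrt : ∀ t ∈ Icc a b, |f t - √t| ≤ ε)
    (hf' : ∀ t ∈ Ioo a b, |f' t - 1 / (2 * √t)| ≤ ε)
    (hlam : lam ∈ Icc (a + 2 * √b * ε) (b - 2 * √b * ε)) :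
    ∃! φ, φ ∈ Icc a b ∧ f φ = √lam := by
  have hK : 0 < 2 * √b := mul_pos two_pos (Real.sqrt_pos.2 (ha.trans_lt hab))
  have h_mono := (monotoneOn_two_mul_sqrt_mul_sqrt_sub b).mono (Icc_subset_Icc_left ha)
  obtain ⟨φ, hφ, hφ_eq⟩ := exists_mem_Icc_eq_of_abs_sub_le hK hab.le h_mono hf hf_sqrt hlam
  have h_inj : InjOn f (Icc a b) :=
    (strictMonoOn_of_abs_deriv_sub_deriv_sqrt_le ha hε hf hderiv hf').injOn
  exact ⟨φ, ⟨hφ, hφ_eq⟩, fun ψ ⟨hψ, hψ_eq⟩ => h_inj hψ hφ (hψ_eq.trans hφ_eq.symm)⟩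

end Sqrt

theorem level_set_graph_general (T δ : ℝ) (hδ : 0 < δ) (hδT : 4 * δ < T) (C : ℝ) (hC : 0 < C) :
    ∃ N₀ : ℕ, 1 ≤ N₀ ∧ ∃ C' > (0 : ℝ), ∀ N : ℕ, N₀ ≤ N → ∀ f f' : ℝ → ℝ,
      (∀ τ ∈ Icc δ (T - δ), HasDerivWithinAt f (f' τ) (Icc δ (T - δ)) τ) →
      (∀ τ ∈ Icc δ (T - δ), |f τ - √τ| ≤ C / N) →
      (∀ τ ∈ Icc δ (T - δ), |f' τ - 1 / (2 * √τ)| ≤ C / N) →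
      ∀ lam ∈ Icc (2 * δ) (T - 2 * δ),
        (∃! φ : ℝ, φ ∈ Icc δ (T - δ) ∧ f φ = √lam) ∧
        (∀ φ ∈ Icc δ (T - δ), f φ = √lam → |φ - lam| ≤ C' / N) := by
  have hsqrt : 0 < √(T - δ) := Real.sqrt_pos.2 (by linarith)
  have h_small : ∀ᶠ N : ℕ in atTop, 2 * √(T - δ) * C / N < min 1 δ :=
    (tendsto_const_div_atTop_nhds_zero_nat _).eventually_lt_const (lt_min one_pos hδ)
  obtain ⟨N₀, hN₀⟩ := eventually_atTop.1 h_small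
  refine ⟨max 1 N₀, le_max_left _ _, 2 * √(T - δ) * C, by positivity, ?_⟩
  intro N hN f f' hderiv hf hf' lam hlam
  obtain ⟨hN_one, hN_δ⟩ := lt_min_iff.1 (hN₀ N (le_of_max_le_right hN))
  rw [mul_div_assoc] at hN_one hN_δ ⊢
  constructor
  · exact existsUnique_eq_sqrt_of_abs_sub_sqrt_le hδ.le (by linarith) hN_one
      (fun τ hτ => (hderiv τ hτ).continuousWithinAt)
      (fun τ hτ => (hderiv τ (Ioo_subset_Icc_self hτ)).hasDerivAt (Icc_mem_nhds hτ.1 hτ.2))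
      hf (fun τ hτ => hf' τ (Ioo_subset_Icc_self hτ))
      ⟨by linarith [hlam.1], by linarith [hlam.2]⟩
  · intro φ hφ hφ_eq
    have hφ_mem : φ ∈ Icc 0 (T - δ) := Icc_subset_Icc_left hδ.le hφ
    have hlam_mem : lam ∈ Icc 0 (T - δ) := ⟨by linarith [hlam.1], by linarith [hlam.2]⟩
    calc |φ - lam| ≤ 2 * √(T - δ) * |√φ - √lam| :=
          abs_sub_le_two_mul_sqrt_mul_abs_sqrt_sub_sqrt hφ_mem hlam_mem
      _ = 2 * √(T - δ) * |f φ - √φ| := by rw [hφ_eq, abs_sub_comm]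
      _ ≤ 2 * √(T - δ) * (C / N) := by
        gcongr
        exact hf φ hφ

/-- quantitative implicit-function statement for the level sets of
`b/√(2N) = √τ + O(1/N)` on Perelman's N-space: if `g_N(·,x)` is differentiable on
`[δ, T-δ]` with `|g_N - √τ| ≤ C/N` and `|∂_τ g_N - 1/(2√τ)| ≤ C/N`, then for `N` large,
for every `λ ∈ [2δ, T-2δ]` and every `x` there is a unique `φ ∈ [δ, T-δ]` with
`g_N(φ,x) = √λ`, and it satisfies `|φ - λ| ≤ C'/N`. -/
theorem level_set_graph
    (T δ : ℝ) (hδ : 0 < δ) (hδT : 4 * δ < T)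
    (X : Type*) [Nonempty X] (C : ℝ) (hC : 0 < C)
    (g g' : ℕ → ℝ → X → ℝ)
    (hderiv : ∀ N : ℕ, 1 ≤ N → ∀ x : X, ∀ τ ∈ Set.Icc δ (T - δ),
      HasDerivWithinAt (fun t => g N t x) (g' N τ x) (Set.Icc δ (T - δ)) τ)
    (hg : ∀ N : ℕ, 1 ≤ N → ∀ x : X, ∀ τ ∈ Set.Icc δ (T - δ),
      |g N τ x - Real.sqrt τ| ≤ C / N)
    (hg' : ∀ N : ℕ, 1 ≤ N → ∀ x : X, ∀ τ ∈ Set.Icc δ (T - δ),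
      |g' N τ x - 1 / (2 * Real.sqrt τ)| ≤ C / N) :
    ∃ N₀ : ℕ, 1 ≤ N₀ ∧ ∃ C' > (0 : ℝ), ∀ N : ℕ, N₀ ≤ N →
      ∀ lam ∈ Set.Icc (2 * δ) (T - 2 * δ), ∀ x : X,
        (∃! φ : ℝ, φ ∈ Set.Icc δ (T - δ) ∧ g N φ x = Real.sqrt lam) ∧
        (∀ φ ∈ Set.Icc δ (T - δ), g N φ x = Real.sqrt lam → |φ - lam| ≤ C' / N) := by
  obtain ⟨N₀, hN₀, C', hC', h⟩ := level_set_graph_general T δ hδ hδT C hC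
  exact ⟨N₀, hN₀, C', hC', fun N hN lam hlam x => h N hN (g N · x) (g' N · x)
    (hderiv N (hN₀.trans hN) x) (hg N (hN₀.trans hN) x) (hg' N (hN₀.trans hN) x) lam hlam⟩
end

section
/- Fix an integer n ≥ 1 and for each N ≥ 1 set m = N + n + 1. Let 0 < τ₁ < T, d ≥ 0, and let D ⊆ [τ₁,T] × ℝ^d be compact, with points written (τ,x). Let f, R, q, p be smooth real-valued functions on an open neighborhood U of D with, for a constant C > 0: |∂^α f| ≤ C for |α| ≤ 3 and |∂^α R| ≤ C, |∂^α q| ≤ C, |∂^α p| ≤ C for |α| ≤ 2, all on D. Suppose moreover that the identity ∂_τ f = p − q + R − n/(2τ) holds on U. Define, for N large enough that 1 + 2τR/N ≥ 1/2 on D, G_N := e^{2f/(m−2)}·(1 + 2τR/N)^{−1}·(1 + 2τ·∂_τ f/(m−2))² + (2Nτ/(m−2)²)·e^{2f/(m−2)}·q. Then there exist N₀ ≥ 1 and K > 0 such that for all N ≥ N₀ the function E'_N := (N/2)·(G_N − 1) − (τ·(2p − q + R) + f − n) satisfies |∂^α E'_N| ≤ K/N on D for all multi-indices α with |α| ≤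 2. In other words, (N/2)(G_N − 1) = τ(2p − q + R) + f − n + O_2(1/N) on D. -/
/-
In the variable `ε = 1 / N`, with `c = n - 1` and `h = ∂_τ f`,

  `G = e^{2εf/(1+cε)} (1 + 2ετR)⁻¹ (1 + 2ετh/(1+cε))² + 2ετ (1+cε)⁻² e^{2εf/(1+cε)} q`

is smooth jointly in `(ε, τ, x)` near `ε = 0`, where every denominator equals `1`. There `G = 1` and
`∂_ε G = 2 (f - τR + 2τh + τq)`. Since all `ε`-derivatives of `G` and their derivatives in `(τ, x)`
are bounded near the compact set `{0} × D`, Taylor's formula in `ε` can be applied to each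
`(τ, x)`-derivative separately and gives `G = 1 + 2ε (f - τR + 2τh + τq) + O_k(ε²)`, that is
`(N/2)(G - 1) = f - τR + 2τh + τq + O_k(1/N)`. Finally the heat equation
`2τh = 2τ(p - q + R) - n` turns the leading term into `τ(2p - q + R) + f - n`.
-/

open Filter Topology

theorem eventually_forall_le_one_add_div {X : Type*} [TopologicalSpace X] {D : Set X}
    (hD : IsCompact D) {a : X → ℝ} (ha : ContinuousOn a D) {c : ℝ} (hc : c < 1) :
    ∀ᶠ N : ℕ in atTop, ∀ z ∈ D, c ≤ 1 + a z / N := by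
  obtain ⟨B, hB⟩ := hD.exists_bound_of_continuousOn ha
  have hlim := tendsto_const_div_atTop_nhds_zero_nat B
  filter_upwards [hlim.eventually_lt_const (sub_pos.2 hc)] with N hN z hz
  have hlow : -(B / N) ≤ a z / N := by
    rw [← neg_div]
    exact div_le_div_of_nonneg_right (neg_le_of_abs_le (hB z hz)) N.cast_nonneg
  linarith

theorem eventually_forall_norm_le {P E F : Type*} [TopologicalSpace P] [TopologicalSpace E]
    [SeminormedAddCommGroup F] {D : Set E} (hD : IsCompact D) {H : P × E → F} {a₀ : P}
    (hH : ∀ z ∈ D, ContinuousAt H (a₀, z)) :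
    ∃ K > 0, ∀ᶠ a in 𝓝 a₀, ∀ z ∈ D, ‖H (a, z)‖ ≤ K := by
  obtain ⟨B, hB⟩ := hD.exists_bound_of_continuousOn (f := fun z => H (a₀, z)) fun z hz =>
    ((hH z hz).comp (f := fun z => (a₀, z)) (by fun_prop)).continuousWithinAt
  refine ⟨max B 0 + 1, by positivity, hD.eventually_forall_of_forall_eventually fun z hz => ?_⟩
  have hlt : ‖H (a₀, z)‖ < max B 0 + 1 := by linarith [hB z hz, le_max_left B 0]
  exact ((hH z hz).norm.eventually_lt_const hlt).mono fun _ h => h.le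

section

variable {P E F : Type*} [NormedAddCommGroup P] [NormedSpace ℝ P] [NormedAddCommGroup E]
  [NormedSpace ℝ E] [NormedAddCommGroup F] [NormedSpace ℝ F]

theorem iteratedFDeriv_const_smul_field (c : ℝ) (f : E → F) (i : ℕ) (x : E) :
    iteratedFDeriv ℝ i (c • f) x = c • iteratedFDeriv ℝ i f x := by
  rcases eq_or_ne c 0 with rfl | hc
  · simp [Pi.zero_def]
  · exact (ContinuousLinearEquiv.smulLeft (Units.mk0 c hc) : F ≃L[ℝ] F).iteratedFDeriv_comp_left

theorem iteratedFDeriv_fderiv_apply_const {G : E → F} {x : E} {i : ℕ}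
    (hG : ContDiffAt ℝ (i + 1) G x) (v : E) :
    iteratedFDeriv ℝ i (fun y => fderiv ℝ G y v) x = fderiv ℝ (iteratedFDeriv ℝ i G) x v := by
  induction i generalizing x with
  | zero =>
    ext m
    simp [fderiv_iteratedFDeriv, iteratedFDeriv_one_apply]
  | succ i ih =>
    have hH : ContDiffAt ℝ 2 (iteratedFDeriv ℝ i G) x :=
      hG.iteratedFDeriv_right (by push_cast; rw [add_assoc, one_add_one_eq_two, add_comm])
    have hH' : DifferentiableAt ℝ (fderiv ℝ (iteratedFDeriv ℝ i G)) x :=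
      (hH.fderiv_right (m := 1) (by norm_num)).differentiableAt one_ne_zero
    have hG' : DifferentiableAt ℝ (iteratedFDeriv ℝ (i + 1) G) x :=
      hG.differentiableAt_iteratedFDeriv (mod_cast (i + 1).lt_succ_self)
    have ih_nhds : iteratedFDeriv ℝ i (fun y => fderiv ℝ G y v) =ᶠ[𝓝 x]
        fun y => fderiv ℝ (iteratedFDeriv ℝ i G) y v := by
      filter_upwards [(hG.of_le (m := i + 1) (by simp)).eventually (by norm_cast; simp)]
        with y hy using ih hy
    ext m
    calc iteratedFDeriv ℝ (i + 1) (fun y => fderiv ℝ G y v) x m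
        = fderiv ℝ (fun y => fderiv ℝ (iteratedFDeriv ℝ i G) y v) x (m 0) (Fin.tail m) := by
          rw [iteratedFDeriv_succ_apply_left, ih_nhds.fderiv_eq]
      _ = fderiv ℝ (fderiv ℝ (iteratedFDeriv ℝ i G)) x (m 0) v (Fin.tail m) := by
          simp [fderiv_clm_apply hH' (differentiableAt_const v)]
      _ = fderiv ℝ (fderiv ℝ (iteratedFDeriv ℝ i G)) x v (m 0) (Fin.tail m) := by
          rw [hH.isSymmSndFDerivAt (by simp) (m 0) v]
      _ = fderiv ℝ (iteratedFDeriv ℝ (i + 1) G) x v m := by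
          rw [← fderiv_continuousMultilinear_apply_const_apply hG']
          simp_rw [iteratedFDeriv_succ_apply_left]
          rw [fderiv_continuousMultilinear_apply_const_apply
            (hH'.clm_apply (differentiableAt_const _))]
          simp [fderiv_clm_apply hH' (differentiableAt_const (m 0))]

theorem contDiffAt_prodMk_right {n : WithTop ℕ∞} {G : P × E → F} {a : P} {z : E}
    (hG : ContDiffAt ℝ n G (a, z)) : ContDiffAt ℝ n (fun w => G (a, w)) z :=
  hG.comp (f := fun w => (a, w)) z (by fun_prop)

theorem iteratedFDeriv_prodMk_right {G : P × E → F} {a : P} {z : E} {i : ℕ}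
    (hG : ContDiffAt ℝ i G (a, z)) :
    iteratedFDeriv ℝ i (fun w => G (a, w)) z =
      (iteratedFDeriv ℝ i G (a, z)).compContinuousLinearMap
        fun _ => ContinuousLinearMap.inr ℝ P E := by
  let L := ContinuousLinearMap.inr ℝ P E
  let A : P × E → P × E := fun x => (a, 0) + x
  have hA : A (L z) = (a, z) := by simp [A, L]
  have hslice : (fun w => G (a, w)) = (G ∘ A) ∘ L := by ext w; simp [A, L]
  have hGA : ContDiffAt ℝ i (G ∘ A) (L z) :=
    ContDiffAt.comp (g := G) (f := A) (L z) (by rwa [hA]) (by fun_prop)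
  obtain ⟨u, hu, hzu, hGu⟩ := hGA.contDiffOn' le_rfl (by simp)
  simp only [Set.insert_eq_of_mem (Set.mem_univ _), Set.univ_inter] at hGu
  have hLu : IsOpen (L ⁻¹' u) := hu.preimage L.continuous
  have hcomp := L.iteratedFDerivWithin_comp_right hGu hu.uniqueDiffOn hLu.uniqueDiffOn hzu le_rfl
  rw [iteratedFDerivWithin_of_isOpen i hLu hzu, iteratedFDerivWithin_of_isOpen i hu hzu] at hcomp
  have htrans : iteratedFDeriv ℝ i (G ∘ A) (L z) = iteratedFDeriv ℝ i G (a, z) := by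
    rw [← hA]
    exact iteratedFDeriv_comp_add_left i (a, 0) (L z)
  rw [hslice, hcomp, htrans]

theorem norm_iteratedFDeriv_prodMk_right_le {G : P × E → F} {a : P} {z : E} {i : ℕ}
    (hG : ContDiffAt ℝ i G (a, z)) :
    ‖iteratedFDeriv ℝ i (fun w => G (a, w)) z‖ ≤ ‖iteratedFDeriv ℝ i G (a, z)‖ := by
  rw [iteratedFDeriv_prodMk_right hG]
  refine (ContinuousMultilinearMap.norm_compContinuousLinearMap_le _ _).trans ?_
  exact mul_le_of_le_one_right (norm_nonneg _) <| Finset.prod_le_one (fun _ _ => norm_nonneg _)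
    fun _ _ => ContinuousLinearMap.norm_inr_le_one ℝ P E

theorem hasDerivAt_iteratedFDeriv_prodMk_right {G : ℝ × E → F} {s : ℝ} {z : E} {i : ℕ}
    (hG : ContDiffAt ℝ (i + 1) G (s, z)) :
    HasDerivAt (fun s => iteratedFDeriv ℝ i (fun w => G (s, w)) z)
      (iteratedFDeriv ℝ i (fun w => fderiv ℝ G (s, w) (1, 0)) z) s := by
  let L := ContinuousMultilinearMap.compContinuousLinearMapL (F := F)
    fun _ : Fin i => ContinuousLinearMap.inr ℝ ℝ E
  have hslice : (fun s => iteratedFDeriv ℝ i (fun w => G (s, w)) z) =ᶠ[𝓝 s]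
      fun s => L (iteratedFDeriv ℝ i G (s, z)) := by
    have hcont : ContinuousAt (fun s : ℝ => (s, z)) s := by fun_prop
    filter_upwards [hcont.eventually ((hG.of_le (m := i) (by simp)).eventually (by simp))] with s hs
      using iteratedFDeriv_prodMk_right hs
  have hG' : ContDiffAt ℝ i (fun x => fderiv ℝ G x (1, 0)) (s, z) :=
    (hG.fderiv_right le_rfl).clm_apply contDiffAt_const
  have hderiv : HasDerivAt (fun s => iteratedFDeriv ℝ i G (s, z))
      (fderiv ℝ (iteratedFDeriv ℝ i G) (s, z) (1, 0)) s :=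
    (hG.differentiableAt_iteratedFDeriv (mod_cast i.lt_succ_self)).hasFDerivAt.comp_hasDerivAt s
      ((hasDerivAt_id s).prodMk (hasDerivAt_const s z))
  rw [iteratedFDeriv_prodMk_right hG', iteratedFDeriv_fderiv_apply_const hG]
  exact (L.hasFDerivAt.comp_hasDerivAt s hderiv).congr_of_eventuallyEq hslice

/-- `f a = O_k(r a)` on `D` along `l`: all derivatives of `f a` of order at most `k` are bounded
on `D` by a fixed multiple of `r a`, for `a` eventually along `l`. Partial derivatives are encoded
by the Fréchet derivatives `iteratedFDeriv ℝ i (f a)`, which leads to the same notion. -/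
def IsBigOCk {ι : Type*} (k : ℕ) (D : Set E) (l : Filter ι) (f : ι → E → F) (r : ι → ℝ) : Prop :=
  ∃ K > 0, ∀ᶠ a in l, ∀ z ∈ D, ∀ i ≤ k, ‖iteratedFDeriv ℝ i (f a) z‖ ≤ K * r a

namespace IsBigOCk

variable {ι κ : Type*} {k : ℕ} {D : Set E} {l : Filter ι} {f g : ι → E → F} {r s : ι → ℝ}

theorem congr (hf : IsBigOCk k D l f r) (hfg : ∀ᶠ a in l, ∀ z ∈ D, f a =ᶠ[𝓝 z] g a) :
    IsBigOCk k D l g r := by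
  obtain ⟨K, hK, hbound⟩ := hf
  refine ⟨K, hK, ?_⟩
  filter_upwards [hbound, hfg] with a ha hfg z hz i hi
  rw [← ((hfg z hz).iteratedFDeriv ℝ i).eq_of_nhds]
  exact ha z hz i hi

theorem mono_rate (hf : IsBigOCk k D l f r) (hrs : ∀ᶠ a in l, r a ≤ s a) :
    IsBigOCk k D l f s := by
  obtain ⟨K, hK, hbound⟩ := hf
  refine ⟨K, hK, ?_⟩
  filter_upwards [hbound, hrs] with a ha hrs z hz i hi
  exact (ha z hz i hi).trans (by gcongr)

theorem comp_tendsto (hf : IsBigOCk k D l f r) {l' : Filter κ} {u : κ → ι}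
    (hu : Tendsto u l' l) : IsBigOCk k D l' (f ∘ u) (r ∘ u) := by
  obtain ⟨K, hK, hbound⟩ := hf
  exact ⟨K, hK, hu.eventually hbound⟩

theorem const_smul (hf : IsBigOCk k D l f r) (c : ι → ℝ) :
    IsBigOCk k D l (fun a => c a • f a) fun a => |c a| * r a := by
  obtain ⟨K, hK, hbound⟩ := hf
  refine ⟨K, hK, hbound.mono fun a ha z hz i hi => ?_⟩
  calc ‖iteratedFDeriv ℝ i (c a • f a) z‖ = |c a| * ‖iteratedFDeriv ℝ i (f a) z‖ := by
        rw [iteratedFDeriv_const_smul_field, norm_smul, Real.norm_eq_abs]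
    _ ≤ |c a| * (K * r a) := by gcongr; exact ha z hz i hi
    _ = K * (|c a| * r a) := mul_left_comm _ _ _

theorem exists_nat_forall_ge {f : ℕ → E → F} {P : ℕ → Prop}
    (hf : IsBigOCk k D atTop f fun N => 1 / (N : ℝ)) (hP : ∀ᶠ N in atTop, P N) :
    ∃ N₀ : ℕ, 1 ≤ N₀ ∧ ∃ K > (0 : ℝ), ∀ N : ℕ, N₀ ≤ N →
      P N ∧ ∀ z ∈ D, ∀ i ≤ k, ‖iteratedFDeriv ℝ i (f N) z‖ ≤ K / N := by
  obtain ⟨K, hK, hbound⟩ := hf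
  obtain ⟨N₀, hN₀⟩ := eventually_atTop.1 (hP.and hbound)
  refine ⟨max N₀ 1, le_max_right _ _, K, hK, fun N hN => ?_⟩
  obtain ⟨hPN, hboundN⟩ := hN₀ N (le_of_max_le_left hN)
  exact ⟨hPN, fun z hz i hi => (hboundN z hz i hi).trans_eq (mul_one_div K (N : ℝ))⟩

end IsBigOCk

theorem isBigOCk_one_of_contDiffAt {k : ℕ} {D : Set E} (hD : IsCompact D) {G : P × E → F} {a₀ : P}
    (hG : ∀ z ∈ D, ContDiffAt ℝ k G (a₀, z)) :
    IsBigOCk k D (𝓝 a₀) (fun a w => G (a, w)) fun _ => 1 := by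
  obtain ⟨K, hK, hbound⟩ := eventually_forall_norm_le hD
    (H := fun x => ∑ i ∈ Finset.range (k + 1), ‖iteratedFDeriv ℝ i G x‖) (a₀ := a₀) fun z hz =>
    tendsto_finsetSum _ fun i hi =>
      ((hG z hz).continuousAt_iteratedFDeriv (mod_cast Finset.mem_range_succ_iff.1 hi)).norm
  have hsmooth : ∀ᶠ a in 𝓝 a₀, ∀ z ∈ D, ContDiffAt ℝ k G (a, z) :=
    hD.eventually_forall_of_forall_eventually fun z hz => (hG z hz).eventually (by simp)
  refine ⟨K, hK, ?_⟩
  filter_upwards [hbound, hsmooth] with a ha hGa z hz i hi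
  calc ‖iteratedFDeriv ℝ i (fun w => G (a, w)) z‖
      ≤ ‖iteratedFDeriv ℝ i G (a, z)‖ :=
        norm_iteratedFDeriv_prodMk_right_le ((hGa z hz).of_le (mod_cast hi))
    _ ≤ ∑ i ∈ Finset.range (k + 1), ‖iteratedFDeriv ℝ i G (a, z)‖ :=
        Finset.single_le_sum (f := fun i => ‖iteratedFDeriv ℝ i G (a, z)‖)
          (fun _ _ => norm_nonneg _) (Finset.mem_range_succ_iff.2 hi)
    _ ≤ K * 1 := by rw [mul_one]; exact (le_abs_self _).trans (ha z hz)

theorem norm_sub_sub_smul_le_of_hasDerivAt {H H' H'' : ℝ → F} {M ε : ℝ}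
    (hH : ∀ s ∈ Set.uIcc 0 ε, HasDerivAt H (H' s) s)
    (hH' : ∀ s ∈ Set.uIcc 0 ε, HasDerivAt H' (H'' s) s)
    (hM : ∀ s ∈ Set.uIcc 0 ε, ‖H'' s‖ ≤ M) :
    ‖H ε - H 0 - ε • H' 0‖ ≤ M * ε ^ 2 := by
  have h0 : (0 : ℝ) ∈ Set.uIcc 0 ε := Set.left_mem_uIcc
  have hM0 : 0 ≤ M := (norm_nonneg _).trans (hM 0 h0)
  have hconv : Convex ℝ (Set.uIcc 0 ε) := convex_uIcc 0 ε
  have hfirst : ∀ s ∈ Set.uIcc 0 ε, ‖H' s - H' 0‖ ≤ M * |ε| := fun s hs =>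
    calc ‖H' s - H' 0‖ ≤ M * ‖s - 0‖ := hconv.norm_image_sub_le_of_norm_hasDerivWithin_le
          (fun r hr => (hH' r hr).hasDerivWithinAt) hM h0 hs
      _ ≤ M * |ε| := by
          gcongr
          simpa using Set.abs_sub_left_of_mem_uIcc hs
  have hrem : ∀ s ∈ Set.uIcc 0 ε, HasDerivAt (fun s => H s - s • H' 0) (H' s - H' 0) s :=
    fun s hs => (hH s hs).sub (by simpa using (hasDerivAt_id s).smul_const (H' 0))
  calc ‖H ε - H 0 - ε • H' 0‖
      = ‖(H ε - ε • H' 0) - (H 0 - (0 : ℝ) • H' 0)‖ := by congr 1; module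
    _ ≤ M * |ε| * ‖ε - 0‖ := hconv.norm_image_sub_le_of_norm_hasDerivWithin_le
          (fun s hs => (hrem s hs).hasDerivWithinAt) hfirst h0 Set.right_mem_uIcc
    _ = M * ε ^ 2 := by rw [sub_zero, Real.norm_eq_abs, mul_assoc, ← sq, sq_abs]

theorem isBigOCk_taylor_one {k : ℕ} {D : Set E} (hD : IsCompact D) {G : ℝ × E → F}
    (hG : ∀ z ∈ D, ContDiffAt ℝ (k + 2) G (0, z)) :
    IsBigOCk k D (𝓝 0) (fun ε w => G (ε, w) - G (0, w) - ε • fderiv ℝ G (0, w) (1, 0))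
      fun ε => ε ^ 2 := by
  let G₁ : ℝ × E → F := fun x => fderiv ℝ G x (1, 0)
  let G₂ : ℝ × E → F := fun x => fderiv ℝ G₁ x (1, 0)
  have hG₁ : ∀ x, ContDiffAt ℝ (k + 2) G x → ContDiffAt ℝ (k + 1) G₁ x := fun x hx =>
    (hx.fderiv_right (by rw [add_assoc, one_add_one_eq_two])).clm_apply contDiffAt_const
  have hG₂ : ∀ z ∈ D, ContDiffAt ℝ k G₂ (0, z) := fun z hz =>
    ((hG₁ _ (hG z hz)).fderiv_right le_rfl).clm_apply contDiffAt_const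
  obtain ⟨M, hM, hbound⟩ := isBigOCk_one_of_contDiffAt hD hG₂
  have hsmooth : ∀ᶠ s in 𝓝 (0 : ℝ), ∀ z ∈ D, ContDiffAt ℝ (k + 2) G (s, z) :=
    hD.eventually_forall_of_forall_eventually fun z hz => (hG z hz).eventually (n := k + 2)
      (mod_cast ENat.natCast_ne_coe_top (k + 2))
  obtain ⟨δ, hδ, hball⟩ := Metric.eventually_nhds_iff.1 (hbound.and hsmooth)
  refine ⟨M, hM, Metric.eventually_nhds_iff.2 ⟨δ, hδ, fun ε hε z hz i hi => ?_⟩⟩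
  have hseg : ∀ s ∈ Set.uIcc 0 ε, dist s 0 < δ := fun s hs => by
    refine lt_of_le_of_lt ?_ hε
    simpa [Real.dist_eq] using Set.abs_sub_left_of_mem_uIcc hs
  have hGs : ∀ s ∈ Set.uIcc 0 ε, ContDiffAt ℝ (k + 2) G (s, z) := fun s hs =>
    (hball (hseg s hs)).2 z hz
  have hi' : (i : WithTop ℕ∞) ≤ k := mod_cast hi
  have htaylor := norm_sub_sub_smul_le_of_hasDerivAt (ε := ε) (M := M)
    (fun s hs => hasDerivAt_iteratedFDeriv_prodMk_right (i := i)
      ((hGs s hs).of_le (by gcongr; exact one_le_two)))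
    (fun s hs => hasDerivAt_iteratedFDeriv_prodMk_right (i := i)
      ((hG₁ _ (hGs s hs)).of_le (by gcongr)))
    (fun s hs => by simpa using (hball (hseg s hs)).1 z hz i hi)
  have hslice : ∀ s, ContDiffAt ℝ (k + 2) G (s, z) → ContDiffAt ℝ i (fun w => G (s, w)) z :=
    fun s hs => contDiffAt_prodMk_right (hs.of_le (hi'.trans le_self_add))
  have hslice₁ : ContDiffAt ℝ i (fun w => G₁ (0, w)) z :=
    contDiffAt_prodMk_right ((hG₁ _ (hG z hz)).of_le (hi'.trans le_self_add))
  have hsε := hslice ε (hGs ε Set.right_mem_uIcc)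
  have hs0 := hslice 0 (hG z hz)
  change ‖iteratedFDeriv ℝ i (fun w => G (ε, w) - G (0, w) - ε • G₁ (0, w)) z‖ ≤ M * ε ^ 2
  rwa [fun_iteratedFDeriv_sub_apply (hsε.sub hs0) (hslice₁.const_smul ε),
    fun_iteratedFDeriv_sub_apply hsε hs0, iteratedFDeriv_const_smul_apply' hslice₁]

/-- `|∇̂b|²` in Perelman's `N`-space as a function of `ε = 1 / N`, so that `m - 2 = (1 + c * ε) / ε`
with `c = n - 1`; the arguments `t`, `f`, `R`, `q`, `h` are the values of `τ`, `f`, `R`, `|∇f|²`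
and `∂_τ f`. In this variable it extends smoothly to `ε = 0`. -/
noncomputable def gradSq (c t f R q h ε : ℝ) : ℝ :=
  Real.exp (2 * ε * f / (1 + c * ε)) * (1 + 2 * ε * t * R)⁻¹ *
      (1 + 2 * ε * t * h / (1 + c * ε)) ^ 2 +
    2 * ε * t / (1 + c * ε) ^ 2 * Real.exp (2 * ε * f / (1 + c * ε)) * q

theorem gradSq_zero (c t f R q h : ℝ) : gradSq c t f R q h 0 = 1 := by simp [gradSq]

theorem gradSq_inv (n t f R q h : ℝ) {N : ℝ} (hN : N ≠ 0) :
    gradSq (n - 1) t f R q h N⁻¹ =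
      Real.exp (2 * f / (N + n - 1)) * (1 + 2 * t * R / N)⁻¹ *
          (1 + 2 * t * h / (N + n - 1)) ^ 2 +
        2 * N * t / (N + n - 1) ^ 2 * Real.exp (2 * f / (N + n - 1)) * q := by
  have hden : 1 + (n - 1) * N⁻¹ = (N + n - 1) / N := by field_simp; ring
  have hquot : ∀ a, 2 * N⁻¹ * a / (1 + (n - 1) * N⁻¹) = 2 * a / (N + n - 1) := fun a => by
    rw [hden]; field_simp
  have hquot' : 2 * N⁻¹ * t / (1 + (n - 1) * N⁻¹) ^ 2 = 2 * N * t / (N + n - 1) ^ 2 := by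
    rw [hden]; field_simp
  have hprod : 2 * N⁻¹ * t * R = 2 * t * R / N := by ring
  rw [gradSq, hquot, hquot', mul_assoc _ t h, hquot, hprod, mul_assoc 2 t h]

theorem hasDerivAt_gradSq_zero (c t f R q h : ℝ) :
    HasDerivAt (gradSq c t f R q h) (2 * (f - t * R + 2 * t * h + t * q)) 0 := by
  have hlin : ∀ b : ℝ, HasDerivAt (fun ε : ℝ => 2 * ε * b) (2 * b) 0 := fun b => by
    simpa using ((hasDerivAt_id (0 : ℝ)).const_mul 2).mul_const b
  have hden : HasDerivAt (fun ε : ℝ => 1 + c * ε) c 0 := by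
    simpa using ((hasDerivAt_id (0 : ℝ)).const_mul c).const_add 1
  have hexp := ((hlin f).div hden (by simp)).exp
  have hinv := (((hlin t).mul_const R).const_add 1).inv (by simp)
  have hsq := ((((hlin t).mul_const h).div hden (by simp)).const_add 1).pow 2
  have hlast := (((hlin t).div (hden.pow 2) (by simp)).mul hexp).mul_const q
  refine (((hexp.mul hinv).mul hsq).add hlast).congr_deriv ?_
  simp only [Pi.div_apply, Pi.inv_apply, Pi.pow_apply, Pi.mul_apply, mul_zero, zero_mul, add_zero,
    sub_zero, div_one, mul_one, one_mul, one_pow, inv_one, mul_neg, Real.exp_zero, Nat.cast_ofNat,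
    Nat.add_one_sub_one]
  ring

theorem contDiffAt_gradSq {n : WithTop ℕ∞} (c : ℝ) {t f R q h ε : E → ℝ} {z : E}
    (ht : ContDiffAt ℝ n t z) (hf : ContDiffAt ℝ n f z) (hR : ContDiffAt ℝ n R z)
    (hq : ContDiffAt ℝ n q z) (hh : ContDiffAt ℝ n h z) (hε : ContDiffAt ℝ n ε z)
    (hε₀ : ε z = 0) :
    ContDiffAt ℝ n (fun w => gradSq c (t w) (f w) (R w) (q w) (h w) (ε w)) z := by
  unfold gradSq
  fun_prop (disch := simp [hε₀])

theorem isBigOCk_gradSq {k : ℕ} {D : Set E} (hD : IsCompact D) (c : ℝ) {t f R q h : E → ℝ}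
    (ht : ∀ z ∈ D, ContDiffAt ℝ (k + 2) t z) (hf : ∀ z ∈ D, ContDiffAt ℝ (k + 2) f z)
    (hR : ∀ z ∈ D, ContDiffAt ℝ (k + 2) R z) (hq : ∀ z ∈ D, ContDiffAt ℝ (k + 2) q z)
    (hh : ∀ z ∈ D, ContDiffAt ℝ (k + 2) h z) :
    IsBigOCk k D (𝓝 0)
      (fun ε w => gradSq c (t w) (f w) (R w) (q w) (h w) ε - 1 -
        ε * (2 * (f w - t w * R w + 2 * t w * h w + t w * q w)))
      fun ε => ε ^ 2 := by
  let G : ℝ × E → ℝ := fun x => gradSq c (t x.2) (f x.2) (R x.2) (q x.2) (h x.2) x.1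
  have hG : ∀ z ∈ D, ContDiffAt ℝ (k + 2) G (0, z) := fun z hz =>
    contDiffAt_gradSq c
      ((ht z hz).comp (0, z) contDiffAt_snd) ((hf z hz).comp (0, z) contDiffAt_snd)
      ((hR z hz).comp (0, z) contDiffAt_snd) ((hq z hz).comp (0, z) contDiffAt_snd)
      ((hh z hz).comp (0, z) contDiffAt_snd) contDiffAt_fst rfl
  have hderiv : ∀ w, DifferentiableAt ℝ G (0, w) →
      fderiv ℝ G (0, w) (1, 0) = 2 * (f w - t w * R w + 2 * t w * h w + t w * q w) := fun w hw =>
    (hw.hasFDerivAt.comp_hasDerivAt (f := fun ε => (ε, w)) (0 : ℝ)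
      ((hasDerivAt_id' (0 : ℝ)).prodMk (hasDerivAt_const (0 : ℝ) w))).unique
        (hasDerivAt_gradSq_zero c (t w) (f w) (R w) (q w) (h w))
  refine (isBigOCk_taylor_one hD hG).congr (Eventually.of_forall fun ε z hz => ?_)
  have hslice : ContinuousAt (fun w => ((0 : ℝ), w)) z := by fun_prop
  have hG₁ : ContDiffAt ℝ 1 G (0, z) := (hG z hz).of_le (one_le_two.trans le_add_self)
  filter_upwards [hslice.eventually (hG₁.eventually (by simp))] with w hw
  simp [G, gradSq_zero, hderiv w (hw.differentiableAt one_ne_zero)]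

theorem isBigOCk_half_mul_gradSq_inv_natCast {k : ℕ} {D : Set E} (hD : IsCompact D) (c : ℝ)
    {t f R q h : E → ℝ}
    (ht : ∀ z ∈ D, ContDiffAt ℝ (k + 2) t z) (hf : ∀ z ∈ D, ContDiffAt ℝ (k + 2) f z)
    (hR : ∀ z ∈ D, ContDiffAt ℝ (k + 2) R z) (hq : ∀ z ∈ D, ContDiffAt ℝ (k + 2) q z)
    (hh : ∀ z ∈ D, ContDiffAt ℝ (k + 2) h z) :
    IsBigOCk k D atTop
      (fun (N : ℕ) w => (N : ℝ) / 2 * (gradSq c (t w) (f w) (R w) (q w) (h w) (N : ℝ)⁻¹ - 1) -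
        (f w - t w * R w + 2 * t w * h w + t w * q w))
      fun N => 1 / (N : ℝ) := by
  have hN : ∀ᶠ N : ℕ in atTop, (N : ℝ) ≠ 0 :=
    (eventually_ne_atTop 0).mono fun N hN => Nat.cast_ne_zero.2 hN
  have hinv : Tendsto (fun N : ℕ => (N : ℝ)⁻¹) atTop (𝓝 0) := tendsto_inv_atTop_nhds_zero_nat
  have hscaled := ((isBigOCk_gradSq hD c ht hf hR hq hh).comp_tendsto hinv).const_smul
    fun N : ℕ => (N : ℝ) / 2
  refine (hscaled.mono_rate (hN.mono fun N hN => ?_)).congr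
    (hN.mono fun N hN z _ => Eventually.of_forall fun w => ?_)
  · have hNpos : (0 : ℝ) < N := lt_of_le_of_ne N.cast_nonneg hN.symm
    rw [abs_of_pos (by positivity), Function.comp_apply]
    field_simp
    norm_num
  · simp only [Pi.smul_apply, Function.comp_apply, smul_eq_mul]
    field_simp

theorem grad_b_sq_heat_equation_expansion_general (n : ℝ) (k : ℕ) {D : Set (ℝ × E)}
    (hD : IsCompact D) (hDτ : ∀ z ∈ D, z.1 ≠ 0) {U : Set (ℝ × E)} (hU : IsOpen U) (hDU : D ⊆ U)
    {f R q p : ℝ × E → ℝ} (hf : ContDiffOn ℝ (k + 3) f U) (hR : ContDiffOn ℝ (k + 2) R U)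
    (hq : ContDiffOn ℝ (k + 2) q U)
    (heq : ∀ z ∈ U, fderiv ℝ f z (1, 0) = p z - q z + R z - n / (2 * z.1)) :
    (∀ᶠ N : ℕ in atTop, ∀ z ∈ D, (1 : ℝ) / 2 ≤ 1 + 2 * z.1 * R z / N) ∧
      IsBigOCk k D atTop
        (fun (N : ℕ) w =>
          (N : ℝ) / 2 *
            ((Real.exp (2 * f w / (N + n - 1)) * (1 + 2 * w.1 * R w / N)⁻¹ *
                (1 + 2 * w.1 * fderiv ℝ f w (1, 0) / (N + n - 1)) ^ 2
              + 2 * N * w.1 / (N + n - 1) ^ 2 *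
                  Real.exp (2 * f w / (N + n - 1)) * q w) - 1)
          - (w.1 * (2 * p w - q w + R w) + f w - n))
        fun N => 1 / (N : ℝ) := by
  have hnhds : ∀ z ∈ D, U ∈ 𝓝 z := fun z hz => hU.mem_nhds (hDU hz)
  have hf' : ∀ z ∈ D, ContDiffAt ℝ (k + 3) f z := fun z hz => hf.contDiffAt (hnhds z hz)
  have hR' : ∀ z ∈ D, ContDiffAt ℝ (k + 2) R z := fun z hz => hR.contDiffAt (hnhds z hz)
  have hq' : ∀ z ∈ D, ContDiffAt ℝ (k + 2) q z := fun z hz => hq.contDiffAt (hnhds z hz)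
  have hh : ∀ z ∈ D, ContDiffAt ℝ (k + 2) (fun w => fderiv ℝ f w (1, 0)) z := fun z hz =>
    ((hf' z hz).fderiv_right (by rw [add_assoc]; norm_num)).clm_apply contDiffAt_const
  refine ⟨eventually_forall_le_one_add_div hD ?_ (by norm_num),
    (isBigOCk_half_mul_gradSq_inv_natCast hD (n - 1) (fun _ _ => contDiffAt_fst)
      (fun z hz => (hf' z hz).of_le (by gcongr; norm_num)) hR' hq' hh).congr ?_⟩
  · exact (continuousOn_const.mul continuousOn_fst).mul (hR.continuousOn.mono hDU)
  · filter_upwards [eventually_ne_atTop 0] with N hN z hz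
    filter_upwards [hnhds z hz, continuousAt_fst.eventually_ne (hDτ z hz)] with w hwU hwτ
    have hheat : f w - w.1 * R w + 2 * w.1 * fderiv ℝ f w (1, 0) + w.1 * q w =
        w.1 * (2 * p w - q w + R w) + f w - n := by
      rw [heq w hwU]
      field_simp
      ring
    rw [hheat, gradSq_inv _ _ _ _ _ _ (Nat.cast_ne_zero.2 hN)]

end

/-- (the key identity `(N/2)(|∇̂b|² - 1) = τ(2Δf - |∇f|² + R) + f - n + O_2(1/N)`
on Perelman's N-space, `m = N + n + 1`, when `f` solves the backward conjugate heat equation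
`∂_τ f = p - q + R - n/(2τ)` with `p = Δf`, `q = |∇f|²`). Here `∂_τ f` is formalized as
`fderiv ℝ f w (1,0)`, and bounds on all partial derivatives of multi-index `α` with
`|α| ≤ k` are formalized as bounds on iterated (Fréchet) derivatives of order `≤ k`. -/
theorem grad_b_sq_heat_equation_expansion
    (n : ℕ) (hn : 1 ≤ n) (τ₁ T : ℝ) (hτ₁ : 0 < τ₁) (hτ₁T : τ₁ < T) (d : ℕ)
    (D : Set (ℝ × (Fin d → ℝ))) (hD : IsCompact D)
    (hDsub : D ⊆ Set.Icc τ₁ T ×ˢ (Set.univ : Set (Fin d → ℝ)))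
    (U : Set (ℝ × (Fin d → ℝ))) (hU : IsOpen U) (hDU : D ⊆ U)
    (f R q p : ℝ × (Fin d → ℝ) → ℝ)
    (hf : ContDiffOn ℝ (⊤ : ℕ∞) f U) (hR : ContDiffOn ℝ (⊤ : ℕ∞) R U)
    (hq : ContDiffOn ℝ (⊤ : ℕ∞) q U) (hp : ContDiffOn ℝ (⊤ : ℕ∞) p U)
    (C : ℝ) (hC : 0 < C)
    (hfb : ∀ z ∈ D, ∀ i ≤ 3, ‖iteratedFDeriv ℝ i f z‖ ≤ C)
    (hRb : ∀ z ∈ D, ∀ i ≤ 2, ‖iteratedFDeriv ℝ i R z‖ ≤ C)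
    (hqb : ∀ z ∈ D, ∀ i ≤ 2, ‖iteratedFDeriv ℝ i q z‖ ≤ C)
    (hpb : ∀ z ∈ D, ∀ i ≤ 2, ‖iteratedFDeriv ℝ i p z‖ ≤ C)
    (heq : ∀ z ∈ U, fderiv ℝ f z ((1, 0) : ℝ × (Fin d → ℝ)) =
      p z - q z + R z - n / (2 * z.1)) :
    ∃ N₀ : ℕ, 1 ≤ N₀ ∧ ∃ K > (0 : ℝ), ∀ N : ℕ, N₀ ≤ N →
      (∀ z ∈ D, (1 : ℝ) / 2 ≤ 1 + 2 * z.1 * R z / N) ∧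
      (∀ z ∈ D, ∀ i ≤ 2,
        ‖iteratedFDeriv ℝ i
          (fun w =>
            ((N : ℝ) / 2) *
              ((Real.exp (2 * f w / ((N : ℝ) + n - 1)) * (1 + 2 * w.1 * R w / N)⁻¹ *
                  (1 + 2 * w.1 * (fderiv ℝ f w ((1, 0) : ℝ × (Fin d → ℝ))) /
                    ((N : ℝ) + n - 1)) ^ 2
                + (2 * N * w.1 / ((N : ℝ) + n - 1) ^ 2) *
                    Real.exp (2 * f w / ((N : ℝ) + n - 1)) * q w) - 1)
            - (w.1 * (2 * p w - q w + R w) + f w - n)) z‖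
          ≤ K / N) := by
  obtain ⟨hlower, herror⟩ := grad_b_sq_heat_equation_expansion_general n 2 hD
    (fun z hz => (hτ₁.trans_le (hDsub hz).1.1).ne') hU hDU (mod_cast contDiffOn_infty.1 hf 5)
    (mod_cast contDiffOn_infty.1 hR 4) (mod_cast contDiffOn_infty.1 hq 4) heq
  exact herror.exists_nat_forall_ge hlower
end

section
/- Fix an integer n ≥ 1, an integer N ≥ 1, and set m = N + n + 1. Let 0 < λ₀ < λ and set s̄ = √(2Nλ₀) and s = √(2Nλ). Let A : [s̄, s] → ℝ be differentiable and let C, C₁ > 0 be constants with |A(w)| ≤ C and |A'(w)| ≤ C₁ for all w ∈ [s̄, s]. Then | (1/s^m)·∫_{s̄}^{s} w^{m−1}·A(w) dw − A(s)/m | ≤ (C/m)·(λ₀/λ)^{m/2} + C₁·s/(m(m+1)). -/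
open intervalIntegral

/-!
Freeze `A` at the right endpoint: `A w = A s + (A w - A s)`. The constant part integrates
to `(s ^ m - a ^ m) / m • A s`, so it costs `a ^ m / m * ‖A s‖` against `s ^ m / m • A s`. The
oscillation is at most `K * (s - w)`, and the Beta-type integral
`∫ w in 0..s, w ^ (m - 1) * (s - w)` equals `s ^ (m + 1) / (m * (m + 1))`. Divide by `s ^ m`.
-/

open scoped NNReal
open MeasureTheory Set

section WeightedAverage

variable {E : Type*} [NormedAddCommGroup E] [NormedSpace ℝ E]
  {m a s : ℝ} {K : ℝ≥0} {A : ℝ → E}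

theorem intervalIntegrable_rpow_sub_one (hm : 0 < m) :
    IntervalIntegrable (fun w : ℝ ↦ w ^ (m - 1)) volume a s :=
  intervalIntegrable_rpow' (by linarith)

theorem intervalIntegrable_rpow_sub_one_mul_sub (hm : 0 < m) :
    IntervalIntegrable (fun w : ℝ ↦ w ^ (m - 1) * (s - w)) volume a s :=
  (intervalIntegrable_rpow_sub_one hm).mul_continuousOn (by fun_prop)

theorem integral_rpow_sub_one_mul_sub (hm : 0 < m) (hs : 0 ≤ s) :
    ∫ w in 0..s, w ^ (m - 1) * (s - w) = s ^ (m + 1) / (m * (m + 1)) := by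
  have integrand_eq : EqOn (fun w : ℝ ↦ w ^ (m - 1) * (s - w))
      (fun w ↦ w ^ (m - 1) * s - w ^ m) (uIcc 0 s) := by
    intro w hw
    rw [uIcc_of_le hs] at hw
    have : w ^ m = w ^ (m - 1) * w := by
      rw [← Real.rpow_add_one' hw.1 (by linarith), sub_add_cancel]
    simp only [this, mul_sub]
  rw [integral_congr integrand_eq,
    integral_sub ((intervalIntegrable_rpow_sub_one hm).mul_const s)
      (intervalIntegrable_rpow' (by linarith)),
    intervalIntegral.integral_mul_const, integral_rpow (Or.inl (by linarith)),
    integral_rpow (Or.inl (by linarith)), sub_add_cancel, Real.zero_rpow hm.ne',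
    Real.zero_rpow (by linarith), Real.rpow_add_one' hs (by linarith)]
  field_simp
  ring

theorem integral_rpow_sub_one_mul_sub_le (hm : 0 < m) (ha : 0 ≤ a) (has : a ≤ s) :
    ∫ w in a..s, w ^ (m - 1) * (s - w) ≤ s ^ (m + 1) / (m * (m + 1)) := by
  rw [← integral_rpow_sub_one_mul_sub hm (ha.trans has)]
  refine integral_mono_interval ha has le_rfl ?_ (intervalIntegrable_rpow_sub_one_mul_sub hm)
  filter_upwards [ae_restrict_mem measurableSet_Ioc] with w hw
  exact mul_nonneg (Real.rpow_nonneg hw.1.le _) (sub_nonneg.2 hw.2)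

theorem norm_integral_rpow_sub_one_smul_sub_le (hm : 0 < m) (ha : 0 ≤ a) (has : a ≤ s)
    (hA : LipschitzOnWith K A (Icc a s)) :
    ‖∫ w in a..s, w ^ (m - 1) • (A w - A s)‖ ≤ K * (s ^ (m + 1) / (m * (m + 1))) := by
  have integrand_le : ∀ w ∈ Ioc a s,
      ‖w ^ (m - 1) • (A w - A s)‖ ≤ K * (w ^ (m - 1) * (s - w)) := by
    intro w hw
    have weight_nonneg : 0 ≤ w ^ (m - 1) := Real.rpow_nonneg (ha.trans hw.1.le) _
    calc ‖w ^ (m - 1) • (A w - A s)‖ = w ^ (m - 1) * ‖A w - A s‖ :=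
          norm_smul_of_nonneg weight_nonneg _
      _ ≤ w ^ (m - 1) * (K * ‖w - s‖) := by
          gcongr
          exact hA.norm_sub_le (Ioc_subset_Icc_self hw) (right_mem_Icc.2 has)
      _ = K * (w ^ (m - 1) * (s - w)) := by
          rw [norm_sub_rev, Real.norm_of_nonneg (sub_nonneg.2 hw.2), mul_left_comm]
  calc ‖∫ w in a..s, w ^ (m - 1) • (A w - A s)‖
      ≤ ∫ w in a..s, K * (w ^ (m - 1) * (s - w)) :=
        norm_integral_le_of_norm_le has (.of_forall integrand_le)
          ((intervalIntegrable_rpow_sub_one_mul_sub hm).const_mul _)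
    _ = K * ∫ w in a..s, w ^ (m - 1) * (s - w) := integral_const_mul _ _
    _ ≤ K * (s ^ (m + 1) / (m * (m + 1))) := by
        gcongr
        exact integral_rpow_sub_one_mul_sub_le hm ha has

variable [CompleteSpace E]

theorem integral_rpow_sub_one_smul_eq_add (hm : 0 < m) (hA : ContinuousOn A (uIcc a s)) :
    ∫ w in a..s, w ^ (m - 1) • A w
      = ((s ^ m - a ^ m) / m) • A s + ∫ w in a..s, w ^ (m - 1) • (A w - A s) := by
  have weight_integrable := intervalIntegrable_rpow_sub_one (a := a) (s := s) hm
  have const_part : ∫ w in a..s, w ^ (m - 1) • A s = ((s ^ m - a ^ m) / m) • A s := by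
    rw [intervalIntegral.integral_smul_const, integral_rpow (Or.inl (by linarith)), sub_add_cancel]
  simp only [smul_sub]
  rw [integral_sub (weight_integrable.smul_continuousOn hA)
      (weight_integrable.smul_continuousOn continuousOn_const),
    const_part, add_sub_cancel]

theorem norm_integral_rpow_sub_one_smul_sub_smul_le (hm : 0 < m) (ha : 0 ≤ a) (has : a ≤ s)
    (hA : LipschitzOnWith K A (Icc a s)) :
    ‖(∫ w in a..s, w ^ (m - 1) • A w) - (s ^ m / m) • A s‖
      ≤ a ^ m / m * ‖A s‖ + K * (s ^ (m + 1) / (m * (m + 1))) := by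
  have hAc : ContinuousOn A (uIcc a s) := uIcc_of_le has ▸ hA.continuousOn
  have coeff_nonneg : 0 ≤ a ^ m / m := div_nonneg (Real.rpow_nonneg ha m) hm.le
  calc ‖(∫ w in a..s, w ^ (m - 1) • A w) - (s ^ m / m) • A s‖
      = ‖(∫ w in a..s, w ^ (m - 1) • (A w - A s)) - (a ^ m / m) • A s‖ := by
        rw [integral_rpow_sub_one_smul_eq_add hm hAc, sub_div, sub_smul]
        congr 1
        abel
    _ ≤ ‖∫ w in a..s, w ^ (m - 1) • (A w - A s)‖ + ‖(a ^ m / m) • A s‖ := norm_sub_le _ _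
    _ ≤ a ^ m / m * ‖A s‖ + K * (s ^ (m + 1) / (m * (m + 1))) := by
        rw [norm_smul_of_nonneg coeff_nonneg, add_comm]
        gcongr
        exact norm_integral_rpow_sub_one_smul_sub_le hm ha has hA

theorem norm_inv_rpow_smul_integral_sub_inv_smul_le (hm : 0 < m) (ha : 0 ≤ a) (has : a ≤ s)
    (hs : 0 < s) (hA : LipschitzOnWith K A (Icc a s)) :
    ‖(s ^ m)⁻¹ • (∫ w in a..s, w ^ (m - 1) • A w) - m⁻¹ • A s‖
      ≤ ‖A s‖ / m * (a / s) ^ m + K * s / (m * (m + 1)) := by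
  have hsm : 0 < s ^ m := Real.rpow_pos_of_pos hs m
  calc ‖(s ^ m)⁻¹ • (∫ w in a..s, w ^ (m - 1) • A w) - m⁻¹ • A s‖
      = (s ^ m)⁻¹ * ‖(∫ w in a..s, w ^ (m - 1) • A w) - (s ^ m / m) • A s‖ := by
        rw [← norm_smul_of_nonneg (inv_nonneg.2 hsm.le), smul_sub, smul_smul,
          inv_mul_eq_div, div_div_cancel_left' hsm.ne']
    _ ≤ (s ^ m)⁻¹ * (a ^ m / m * ‖A s‖ + K * (s ^ (m + 1) / (m * (m + 1)))) := by
        gcongr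
        exact norm_integral_rpow_sub_one_smul_sub_smul_le hm ha has hA
    _ = ‖A s‖ / m * (a / s) ^ m + K * s / (m * (m + 1)) := by
        rw [Real.rpow_add_one hs.ne', Real.div_rpow ha hs.le]
        field_simp

end WeightedAverage

theorem sqrt_mul_div_sqrt_mul_rpow {c x y : ℝ} (m : ℝ) (hc : 0 < c) (hx : 0 ≤ x) (hy : 0 ≤ y) :
    (√(c * x) / √(c * y)) ^ m = (x / y) ^ (m / 2) := by
  rw [← Real.sqrt_div (by positivity), mul_div_mul_left _ _ hc.ne',
    Real.rpow_div_two_eq_sqrt m (by positivity)]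

theorem weighted_average_first_order_general
    {E : Type*} [NormedAddCommGroup E] [NormedSpace ℝ E] [CompleteSpace E]
    {m c lam₀ lam C : ℝ} {K : ℝ≥0} {A : ℝ → E}
    (hm : 0 < m) (hc : 0 < c) (hlam₀ : 0 ≤ lam₀) (hlam : lam₀ < lam)
    (hA : LipschitzOnWith K A (Icc √(c * lam₀) √(c * lam)))
    (hAs : ‖A √(c * lam)‖ ≤ C) :
    ‖(√(c * lam) ^ m)⁻¹ • (∫ w in √(c * lam₀)..√(c * lam), w ^ (m - 1) • A w)
        - m⁻¹ • A √(c * lam)‖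
      ≤ C / m * (lam₀ / lam) ^ (m / 2) + K * √(c * lam) / (m * (m + 1)) := by
  have hlam_pos : 0 < lam := hlam₀.trans_lt hlam
  rw [← sqrt_mul_div_sqrt_mul_rpow m hc hlam₀ hlam_pos.le]
  refine (norm_inv_rpow_smul_integral_sub_inv_smul_le hm (Real.sqrt_nonneg _)
    (by gcongr) (by positivity) hA).trans ?_
  gcongr

/-- first-order weighted-average lemma, `m = N + n + 1`,
`s̄ = √(2Nλ₀)`, `s = √(2Nλ)`:
`| s^{-m} ∫_{s̄}^{s} w^{m-1} A(w) dw - A(s)/m | ≤ (C/m)(λ₀/λ)^{m/2} + C₁ s/(m(m+1))`. -/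
theorem weighted_average_first_order
    (n N : ℕ) (hn : 1 ≤ n) (hN : 1 ≤ N)
    (lam₀ lam : ℝ) (hlam₀ : 0 < lam₀) (hlam : lam₀ < lam)
    (A A' : ℝ → ℝ) (C C₁ : ℝ) (hC : 0 < C) (hC₁ : 0 < C₁)
    (hA : ∀ w ∈ Set.Icc (Real.sqrt (2 * N * lam₀)) (Real.sqrt (2 * N * lam)),
      HasDerivWithinAt A (A' w)
        (Set.Icc (Real.sqrt (2 * N * lam₀)) (Real.sqrt (2 * N * lam))) w)
    (hAb : ∀ w ∈ Set.Icc (Real.sqrt (2 * N * lam₀)) (Real.sqrt (2 * N * lam)),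
      |A w| ≤ C)
    (hA'b : ∀ w ∈ Set.Icc (Real.sqrt (2 * N * lam₀)) (Real.sqrt (2 * N * lam)),
      |A' w| ≤ C₁) :
    |(Real.sqrt (2 * N * lam) ^ (N + n + 1))⁻¹ *
        (∫ w in (Real.sqrt (2 * N * lam₀))..(Real.sqrt (2 * N * lam)),
          w ^ (N + n) * A w)
      - A (Real.sqrt (2 * N * lam)) / ((N : ℝ) + n + 1)|
    ≤ (C / ((N : ℝ) + n + 1)) * (lam₀ / lam) ^ (((N : ℝ) + n + 1) / 2)
      + C₁ * Real.sqrt (2 * N * lam) / (((N : ℝ) + n + 1) * ((N : ℝ) + n + 2)) := by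
  lift C₁ to ℝ≥0 using hC₁.le
  have hs : √(2 * N * lam) ∈ Icc √(2 * N * lam₀) √(2 * N * lam) :=
    right_mem_Icc.2 (by gcongr)
  have hLip := (convex_Icc _ _).lipschitzOnWith_of_nnnorm_hasDerivWithin_le hA hA'b
  have h := weighted_average_first_order_general (m := (N + n + 1 : ℕ)) (c := 2 * N)
    (by positivity) (by positivity) hlam₀.le hlam hLip (hAb _ hs)
  have pred_cast : ((N + n + 1 : ℕ) : ℝ) - 1 = (N + n : ℕ) := by push_cast; ring
  have succ_cast : ((N + n + 1 : ℕ) : ℝ) + 1 = N + n + 2 := by push_cast; ring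
  simp only [pred_cast, succ_cast, Real.rpow_natCast] at h
  simpa only [Nat.cast_add, Nat.cast_one, smul_eq_mul, inv_mul_eq_div, Real.norm_eq_abs] using h
end

section
/- Fix an integer n ≥ 1, an integer N ≥ 1, and set m = N + n + 1. Let 0 < λ₀ < λ and set s̄ = √(2Nλ₀) and s = √(2Nλ). Let A : [s̄, s] → ℝ be twice differentiable and let C, C₁, C₂ > 0 be constants with |A(w)| ≤ C, |A'(w)| ≤ C₁ and |A''(w)| ≤ C₂ for all w ∈ [s̄, s]. Then | (1/s^m)·∫_{s̄}^{s} w^{m−1}·A(w) dw − A(s)/m + s·A'(s)/(m(m+1)) | ≤ (C/m + C₁·s)·(λ₀/λ)^{m/2} + C₂·s²/(m(m+1)(m+2)). -/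
open intervalIntegral

/-!
Integrate `w ^ (m - 1) * A w` by parts twice. The boundary terms at `s` are exactly the two terms
`A s / m - s * A' s / (m * (m + 1))` of the expansion; those at `s̄`, after division by `s ^ m`,
carry the factor `(s̄ / s) ^ m = (λ₀ / λ) ^ (m / 2)`; and the remaining integral of
`w ^ (m + 1) * A'' w / (m * (m + 1))` is bounded by integrating `C₂ * w ^ (m + 1)`. The second
integration by parts needs no continuity of `A''`: a derivative is measurable, so a bounded one is
integrable.
-/

open MeasureTheory Set

open scoped Interval

section

variable {E : Type*} [NormedAddCommGroup E] [NormedSpace ℝ E] {f f' f'' g : ℝ → E}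
  {a b x C C₁ C₂ : ℝ} {k : ℕ}

theorem norm_integral_pow_smul_le (ha : 0 ≤ a) (hab : a ≤ b) (hg : ∀ x ∈ Ioc a b, ‖g x‖ ≤ C) :
    ‖∫ x in a..b, x ^ k • g x‖ ≤ C * ((b ^ (k + 1) - a ^ (k + 1)) / (k + 1)) := by
  rw [← integral_pow, ← intervalIntegral.integral_const_mul]
  refine norm_integral_le_of_norm_le hab (.of_forall fun x hx ↦ ?_)
    (Continuous.intervalIntegrable (by fun_prop) a b)
  have hx0 : 0 ≤ x := ha.trans hx.1.le
  rw [norm_smul, Real.norm_of_nonneg (pow_nonneg hx0 k), mul_comm]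
  gcongr
  exact hg x hx

/-- The boundary term of two integrations by parts of `x ^ k • f x`, with `f'` standing for the
derivative of `f`: it is an antiderivative of `x ^ k • f x` up to a term in the second derivative
of `f`. -/
noncomputable def twoTermPrimitive (k : ℕ) (f f' : ℝ → E) (x : ℝ) : E :=
  (x ^ (k + 1) / (k + 1)) • f x - (x ^ (k + 2) / ((k + 1) * (k + 2))) • f' x

theorem inv_pow_smul_twoTermPrimitive (hx : x ≠ 0) :
    (x ^ (k + 1))⁻¹ • twoTermPrimitive k f f' x =
      (k + 1 : ℝ)⁻¹ • f x - (x / ((k + 1) * (k + 2))) • f' x := by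
  rw [twoTermPrimitive, smul_sub, smul_smul, smul_smul]
  congr 2
  · field_simp
  · field_simp
    ring

theorem norm_twoTermPrimitive_le (hx : 0 ≤ x) (hf : ‖f x‖ ≤ C) (hf' : ‖f' x‖ ≤ C₁) :
    ‖twoTermPrimitive k f f' x‖ ≤ (C / (k + 1) + C₁ * x) * x ^ (k + 1) := by
  have hk : (1 : ℝ) ≤ (k + 1) * (k + 2) := by norm_cast; nlinarith
  calc ‖twoTermPrimitive k f f' x‖
      ≤ x ^ (k + 1) / (k + 1) * ‖f x‖ + x ^ (k + 2) / ((k + 1) * (k + 2)) * ‖f' x‖ := by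
        refine (norm_sub_le _ _).trans_eq ?_
        rw [norm_smul_of_nonneg (by positivity), norm_smul_of_nonneg (by positivity)]
    _ ≤ x ^ (k + 1) / (k + 1) * C + x ^ (k + 2) * C₁ := by
        gcongr
        exact div_le_self (by positivity) hk
    _ = (C / (k + 1) + C₁ * x) * x ^ (k + 1) := by ring

variable [CompleteSpace E]

theorem intervalIntegrable_of_hasDerivAt_of_norm_le (hf : ∀ x ∈ uIoo a b, HasDerivAt f (f' x) x)
    (hf' : ∀ x ∈ uIoo a b, ‖f' x‖ ≤ C) : IntervalIntegrable f' volume a b := by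
  have hderiv : EqOn (deriv f) f' (uIoo a b) := fun x hx ↦ (hf x hx).deriv
  have hbdd : ∀ᵐ x ∂volume.restrict (uIoo a b), ‖deriv f x‖ ≤ C :=
    ae_restrict_of_forall_mem measurableSet_Ioo fun x hx ↦ (hderiv hx).symm ▸ hf' x hx
  rw [intervalIntegrable_iff, uIoc, integrableOn_Ioc_iff_integrableOn_Ioo]
  exact (Measure.integrableOn_of_bounded measure_Ioo_lt_top.ne (aestronglyMeasurable_deriv f _)
    hbdd).congr_fun hderiv measurableSet_Ioo

theorem integral_pow_smul_eq_sub_integral_pow_smul_deriv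
    (hf : ∀ x ∈ [[a, b]], HasDerivWithinAt f (f' x) [[a, b]] x)
    (hf' : IntervalIntegrable f' volume a b) :
    ∫ x in a..b, x ^ k • f x =
      (k + 1 : ℝ)⁻¹ •
        (b ^ (k + 1) • f b - a ^ (k + 1) • f a - ∫ x in a..b, x ^ (k + 1) • f' x) := by
  have hpow (x : ℝ) : HasDerivAt (fun x : ℝ ↦ x ^ (k + 1)) ((k + 1) * x ^ k) x := by
    simpa using hasDerivAt_pow (k + 1) x
  rw [integral_smul_deriv_eq_deriv_smul_of_hasDerivWithinAt (fun x _ ↦ (hpow x).hasDerivWithinAt)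
    hf (Continuous.intervalIntegrable (by fun_prop) a b) hf', sub_sub_cancel]
  simp_rw [mul_smul]
  rw [intervalIntegral.integral_smul, inv_smul_smul₀ (by positivity)]

theorem integral_pow_smul_eq_twoTermPrimitive_sub_add
    (hf : ∀ x ∈ [[a, b]], HasDerivWithinAt f (f' x) [[a, b]] x)
    (hf' : ∀ x ∈ [[a, b]], HasDerivWithinAt f' (f'' x) [[a, b]] x)
    (hf'' : IntervalIntegrable f'' volume a b) :
    ∫ x in a..b, x ^ k • f x =
      twoTermPrimitive k f f' b - twoTermPrimitive k f f' a +
        ((k + 1 : ℝ) * (k + 2))⁻¹ • ∫ x in a..b, x ^ (k + 2) • f'' x := by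
  have hf'_int : IntervalIntegrable f' volume a b :=
    (HasDerivWithinAt.continuousOn hf').intervalIntegrable
  have hcast : ((k + 1 : ℕ) + 1 : ℝ) = k + 2 := by push_cast; ring
  rw [integral_pow_smul_eq_sub_integral_pow_smul_deriv hf hf'_int,
    integral_pow_smul_eq_sub_integral_pow_smul_deriv hf' hf'', hcast]
  simp only [twoTermPrimitive, div_eq_mul_inv, mul_inv]
  module

theorem norm_integral_pow_smul_sub_twoTermPrimitive_sub_le (ha : 0 ≤ a) (hab : a ≤ b)
    (hf : ∀ x ∈ Icc a b, HasDerivWithinAt f (f' x) (Icc a b) x)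
    (hf' : ∀ x ∈ Icc a b, HasDerivWithinAt f' (f'' x) (Icc a b) x)
    (hf'' : ∀ x ∈ Icc a b, ‖f'' x‖ ≤ C₂) :
    ‖(∫ x in a..b, x ^ k • f x) - (twoTermPrimitive k f f' b - twoTermPrimitive k f f' a)‖ ≤
      C₂ * (b ^ (k + 3) - a ^ (k + 3)) / ((k + 1) * (k + 2) * (k + 3)) := by
  have hf''_int : IntervalIntegrable f'' volume a b := by
    refine intervalIntegrable_of_hasDerivAt_of_norm_le (f := f') (C := C₂) ?_ ?_ <;>
      rw [uIoo_of_le hab]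
    · exact fun x hx ↦ (hf' x (Ioo_subset_Icc_self hx)).hasDerivAt (Icc_mem_nhds hx.1 hx.2)
    · exact fun x hx ↦ hf'' x (Ioo_subset_Icc_self hx)
  rw [← uIcc_of_le hab] at hf hf'
  rw [integral_pow_smul_eq_twoTermPrimitive_sub_add hf hf' hf''_int, add_sub_cancel_left,
    norm_smul_of_nonneg (by positivity)]
  calc ((k + 1 : ℝ) * (k + 2))⁻¹ * ‖∫ x in a..b, x ^ (k + 2) • f'' x‖
      ≤ ((k + 1 : ℝ) * (k + 2))⁻¹ *
          (C₂ * ((b ^ (k + 2 + 1) - a ^ (k + 2 + 1)) / ((k + 2 : ℕ) + 1))) := by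
        gcongr
        exact norm_integral_pow_smul_le ha hab fun x hx ↦ hf'' x (Ioc_subset_Icc_self hx)
    _ = C₂ * (b ^ (k + 3) - a ^ (k + 3)) / ((k + 1) * (k + 2) * (k + 3)) := by
        push_cast
        field_simp
        ring

theorem weighted_average_second_order_general (ha : 0 ≤ a) (hab : a ≤ b) (hb : 0 < b)
    (hf : ∀ x ∈ Icc a b, HasDerivWithinAt f (f' x) (Icc a b) x)
    (hf' : ∀ x ∈ Icc a b, HasDerivWithinAt f' (f'' x) (Icc a b) x)
    (hfa : ‖f a‖ ≤ C) (hf'a : ‖f' a‖ ≤ C₁) (hf'' : ∀ x ∈ Icc a b, ‖f'' x‖ ≤ C₂) :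
    ‖(b ^ (k + 1))⁻¹ • (∫ x in a..b, x ^ k • f x) - (k + 1 : ℝ)⁻¹ • f b +
        (b / ((k + 1) * (k + 2))) • f' b‖ ≤
      (C / (k + 1) + C₁ * b) * (a / b) ^ (k + 1) +
        C₂ * b ^ 2 / ((k + 1) * (k + 2) * (k + 3)) := by
  have hC₁ : 0 ≤ C₁ := (norm_nonneg _).trans hf'a
  have hC₂ : 0 ≤ C₂ := (norm_nonneg _).trans (hf'' b (right_mem_Icc.2 hab))
  set I := ∫ x in a..b, x ^ k • f x
  set P := twoTermPrimitive k f f'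
  have hP : ‖P a‖ ≤ (C / (k + 1) + C₁ * b) * a ^ (k + 1) :=
    (norm_twoTermPrimitive_le ha hfa hf'a).trans (by gcongr)
  have hI : ‖I - (P b - P a)‖ ≤ C₂ * b ^ (k + 3) / ((k + 1) * (k + 2) * (k + 3)) :=
    (norm_integral_pow_smul_sub_twoTermPrimitive_sub_le ha hab hf hf' hf'').trans
      (by gcongr; exact sub_le_self _ (by positivity))
  calc ‖(b ^ (k + 1))⁻¹ • I - (k + 1 : ℝ)⁻¹ • f b + (b / ((k + 1) * (k + 2))) • f' b‖
      = ‖(b ^ (k + 1))⁻¹ • (I - (P b - P a) - P a)‖ := by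
        rw [sub_add, ← inv_pow_smul_twoTermPrimitive hb.ne', ← smul_sub, sub_sub, sub_add_cancel]
    _ ≤ (b ^ (k + 1))⁻¹ * (‖I - (P b - P a)‖ + ‖P a‖) := by
        rw [norm_smul_of_nonneg (by positivity)]
        gcongr
        exact norm_sub_le _ _
    _ ≤ (b ^ (k + 1))⁻¹ * (C₂ * b ^ (k + 3) / ((k + 1) * (k + 2) * (k + 3)) +
          (C / (k + 1) + C₁ * b) * a ^ (k + 1)) := by gcongr
    _ = (C / (k + 1) + C₁ * b) * (a / b) ^ (k + 1) +
          C₂ * b ^ 2 / ((k + 1) * (k + 2) * (k + 3)) := by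
        rw [div_pow]
        field_simp
        ring

end

theorem div_rpow_natCast_div_two_eq_sqrt_div_pow {c x y : ℝ} (hc : 0 < c) (hx : 0 ≤ x)
    (hy : 0 ≤ y) (m : ℕ) : (x / y) ^ ((m : ℝ) / 2) = (√(c * x) / √(c * y)) ^ m := by
  rw [Real.rpow_div_two_eq_sqrt _ (div_nonneg hx hy), Real.rpow_natCast,
    ← Real.sqrt_div (mul_nonneg hc.le hx), mul_div_mul_left _ _ hc.ne']

/-- second-order weighted-average lemma, `m = N + n + 1`,
`s̄ = √(2Nλ₀)`, `s = √(2Nλ)`: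
`| s^{-m} ∫_{s̄}^{s} w^{m-1} A(w) dw - A(s)/m + s A'(s)/(m(m+1)) |
  ≤ (C/m + C₁ s)(λ₀/λ)^{m/2} + C₂ s²/(m(m+1)(m+2))`. -/
theorem weighted_average_second_order
    (n N : ℕ) (hn : 1 ≤ n) (hN : 1 ≤ N)
    (lam₀ lam : ℝ) (hlam₀ : 0 < lam₀) (hlam : lam₀ < lam)
    (A A' A'' : ℝ → ℝ) (C C₁ C₂ : ℝ) (hC : 0 < C) (hC₁ : 0 < C₁) (hC₂ : 0 < C₂)
    (hA : ∀ w ∈ Set.Icc (Real.sqrt (2 * N * lam₀)) (Real.sqrt (2 * N * lam)),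
      HasDerivWithinAt A (A' w)
        (Set.Icc (Real.sqrt (2 * N * lam₀)) (Real.sqrt (2 * N * lam))) w)
    (hA' : ∀ w ∈ Set.Icc (Real.sqrt (2 * N * lam₀)) (Real.sqrt (2 * N * lam)),
      HasDerivWithinAt A' (A'' w)
        (Set.Icc (Real.sqrt (2 * N * lam₀)) (Real.sqrt (2 * N * lam))) w)
    (hAb : ∀ w ∈ Set.Icc (Real.sqrt (2 * N * lam₀)) (Real.sqrt (2 * N * lam)),
      |A w| ≤ C)
    (hA'b : ∀ w ∈ Set.Icc (Real.sqrt (2 * N * lam₀)) (Real.sqrt (2 * N * lam)),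
      |A' w| ≤ C₁)
    (hA''b : ∀ w ∈ Set.Icc (Real.sqrt (2 * N * lam₀)) (Real.sqrt (2 * N * lam)),
      |A'' w| ≤ C₂) :
    |(Real.sqrt (2 * N * lam) ^ (N + n + 1))⁻¹ *
        (∫ w in (Real.sqrt (2 * N * lam₀))..(Real.sqrt (2 * N * lam)),
          w ^ (N + n) * A w)
      - A (Real.sqrt (2 * N * lam)) / ((N : ℝ) + n + 1)
      + Real.sqrt (2 * N * lam) * A' (Real.sqrt (2 * N * lam)) /
          (((N : ℝ) + n + 1) * ((N : ℝ) + n + 2))|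
    ≤ (C / ((N : ℝ) + n + 1) + C₁ * Real.sqrt (2 * N * lam)) *
        (lam₀ / lam) ^ (((N : ℝ) + n + 1) / 2)
      + C₂ * Real.sqrt (2 * N * lam) ^ 2 /
          (((N : ℝ) + n + 1) * ((N : ℝ) + n + 2) * ((N : ℝ) + n + 3)) := by
  have hc : (0 : ℝ) < 2 * N := by positivity
  have hlam_pos : 0 < lam := hlam₀.trans hlam
  have hab : √(2 * N * lam₀) ≤ √(2 * N * lam) := Real.sqrt_le_sqrt (by gcongr)
  have ha := left_mem_Icc.2 hab
  have hratio := div_rpow_natCast_div_two_eq_sqrt_div_pow hc hlam₀.le hlam_pos.le (N + n + 1)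
  have hbound := weighted_average_second_order_general (k := N + n) (Real.sqrt_nonneg _) hab
    (Real.sqrt_pos.2 (mul_pos hc hlam_pos)) hA hA' (hAb _ ha) (hA'b _ ha) hA''b
  push_cast at hratio hbound
  rw [hratio]
  simpa only [smul_eq_mul, Real.norm_eq_abs, inv_mul_eq_div, div_mul_eq_mul_div] using hbound
end

section
/- Fix an integer n ≥ 1, an integer N ≥ 1, and set m = N + n + 1. Let 0 < λ₀ < λ, set s̄ = √(2Nλ₀) and s = √(2Nλ), and let φ : [0, s̄] → ℝ be an integrable function with |φ(r)| ≤ C for all r ∈ [0, s̄], where C > 0. Then: (i) | s^{−m}·∫_{0}^{s̄} r^{N}·φ(r) dr | ≤ C·(λ₀/λ)^{(N+1)/2}·(2Nλ)^{−n/2}/(N+1). (ii) Consequently, for any fixed 0 < λ₀ < λ₁ ≤ T there exist constants K > 0 and c > 0 such that for all N ≥ 1 and all λ with λ₁ ≤ λ ≤ T, | s^{−m}·∫_{0}^{s̄} r^{N}·φ(r) dr | ≤ K·e^{−cN}, and moreover the λ-derivative of the function λ ↦ (2Nλ)^{−m/2}·∫_{0}^{s̄} r^{N}·φ(r) dr is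 also bounded by K'·e^{−cN} on [λ₁, T] for some K' > 0. -/
open intervalIntegral

/-!
Since `|φ| ≤ C`, the integral `∫_0^{s̄} r^N φ(r) dr` is at most `C s̄^{N+1} / (N+1)`, and dividing
by `s^{N+n+1}` leaves `C (s̄/s)^{N+1} s^{-n} / (N+1)`, where `s̄/s = √(λ₀/λ)` stays below
`√(λ₀/λ₁) < 1`. The integral does not depend on `λ`, so differentiating `(2Nλ)^{-m/2}` only
produces a factor `-m/(2λ)`; its linear growth in `N` is absorbed by the `1/(N+1)` from integrating
`r^N`.
-/

section InnerRegion

open MeasureTheory Set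

variable {E : Type*} [NormedAddCommGroup E] [NormedSpace ℝ E]

/-- The radial integral `∫_0^{s̄} r^N φ(r) dr` over the inner region `0 ≤ b ≤ s̄` of Perelman's
`N`-space, `s̄ = √(2Nλ₀)`, the factor `r^N` being the density of the volume element. The function
`φ` stands for the bounded remaining integrand and may take values in any real normed space. -/
noncomputable def innerRegionIntegral (N : ℕ) (lam₀ : ℝ) (φ : ℝ → E) : E :=
  ∫ r in (0 : ℝ)..√(2 * N * lam₀), r ^ N • φ r

theorem norm_integral_pow_smul_le_s10 {φ : ℝ → E} {C b : ℝ} (hb : 0 ≤ b)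
    (hφ : ∀ r ∈ Ioc 0 b, ‖φ r‖ ≤ C) (N : ℕ) :
    ‖∫ r in (0 : ℝ)..b, r ^ N • φ r‖ ≤ C * b ^ (N + 1) / (N + 1) := by
  have hbound : ∀ r ∈ Ioc 0 b, ‖r ^ N • φ r‖ ≤ C * r ^ N := fun r hr ↦ by
    have hrN : 0 ≤ r ^ N := pow_nonneg hr.1.le N
    rw [norm_smul, Real.norm_of_nonneg hrN, mul_comm]
    exact mul_le_mul_of_nonneg_right (hφ r hr) hrN
  calc ‖∫ r in (0 : ℝ)..b, r ^ N • φ r‖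
      ≤ ∫ r in (0 : ℝ)..b, C * r ^ N :=
        norm_integral_le_of_norm_le hb (.of_forall hbound)
          (Continuous.intervalIntegrable (by fun_prop) _ _)
    _ = C * b ^ (N + 1) / (N + 1) := by simp [mul_div_assoc]

theorem norm_inv_pow_smul_integral_pow_smul_le {φ : ℝ → E} {C b s : ℝ} (hb : 0 ≤ b) (hs : 0 < s)
    (hφ : ∀ r ∈ Ioc 0 b, ‖φ r‖ ≤ C) (N n : ℕ) :
    ‖(s ^ (N + n + 1))⁻¹ • ∫ r in (0 : ℝ)..b, r ^ N • φ r‖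
      ≤ C * (b / s) ^ (N + 1) * (s ^ n)⁻¹ / (N + 1) := by
  rw [norm_smul, Real.norm_of_nonneg (by positivity)]
  calc (s ^ (N + n + 1))⁻¹ * ‖∫ r in (0 : ℝ)..b, r ^ N • φ r‖
      ≤ (s ^ (N + n + 1))⁻¹ * (C * b ^ (N + 1) / (N + 1)) := by
        gcongr
        exact norm_integral_pow_smul_le_s10 hb hφ N
    _ = C * (b / s) ^ (N + 1) * (s ^ n)⁻¹ / (N + 1) := by
        rw [div_pow]
        field_simp
        ring

theorem sqrt_pow_eq_rpow_div_two {x : ℝ} (hx : 0 ≤ x) (k : ℕ) : √x ^ k = x ^ ((k : ℝ) / 2) := by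
  rw [Real.rpow_div_two_eq_sqrt _ hx, Real.rpow_natCast]

theorem inv_sqrt_pow_eq_rpow {x : ℝ} (hx : 0 ≤ x) (k : ℕ) :
    (√x ^ k)⁻¹ = x ^ (-(k : ℝ) / 2) := by
  rw [sqrt_pow_eq_rpow_div_two hx, neg_div, Real.rpow_neg hx]

theorem norm_inv_sqrt_pow_smul_innerRegionIntegral_le {φ : ℝ → E} {C lam₀ lam : ℝ} {N : ℕ}
    (hN : 1 ≤ N) (hlam₀ : 0 ≤ lam₀) (hlam : 0 < lam)
    (hφ : ∀ r ∈ Ioc 0 √(2 * N * lam₀), ‖φ r‖ ≤ C) (n : ℕ) :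
    ‖(√(2 * N * lam) ^ (N + n + 1))⁻¹ • innerRegionIntegral N lam₀ φ‖
      ≤ C * (lam₀ / lam) ^ (((N : ℝ) + 1) / 2) * (2 * N * lam) ^ (-(n : ℝ) / 2) / (N + 1) := by
  have : (0 : ℝ) < N := by exact_mod_cast hN
  have hratio : √(2 * N * lam₀) / √(2 * N * lam) = √(lam₀ / lam) := by
    rw [← Real.sqrt_div (by positivity), mul_div_mul_left _ _ (by positivity)]
  have hpow : √(lam₀ / lam) ^ (N + 1) = (lam₀ / lam) ^ (((N : ℝ) + 1) / 2) := by
    rw [sqrt_pow_eq_rpow_div_two (by positivity), Nat.cast_add_one]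
  rw [← hpow, ← hratio, ← inv_sqrt_pow_eq_rpow (by positivity)]
  exact norm_inv_pow_smul_integral_pow_smul_le (by positivity) (by positivity) hφ N n

theorem div_rpow_le_exp_neg_log_mul {a b c t : ℝ} (ha : 0 < a) (hab : a ≤ b) (hbc : b ≤ c)
    (ht : 0 ≤ t) :
    (a / c) ^ ((t + 1) / 2) ≤ Real.exp (-(Real.log (b / a) / 2) * t) := by
  have hb : 0 < b := ha.trans_le hab
  have hac : 0 ≤ a / c := div_nonneg ha.le (hb.le.trans hbc)
  calc (a / c) ^ ((t + 1) / 2)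
      ≤ (a / b) ^ ((t + 1) / 2) := by gcongr
    _ ≤ (a / b) ^ (t / 2) :=
        Real.rpow_le_rpow_of_exponent_ge (by positivity) ((div_le_one hb).2 hab) (by linarith)
    _ = Real.exp (-(Real.log (b / a) / 2) * t) := by
        rw [Real.rpow_def_of_pos (by positivity), ← inv_div b a, Real.log_inv]
        ring_nf

theorem norm_inv_sqrt_pow_smul_innerRegionIntegral_le_exp {φ : ℝ → E} {C lam₀ lam₁ lam : ℝ}
    {N : ℕ} (hN : 1 ≤ N) (hlam₀ : 0 < lam₀) (hlam₀₁ : lam₀ ≤ lam₁) (hlam : lam₁ ≤ lam)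
    (hC : 0 ≤ C) (hφ : ∀ r ∈ Ioc 0 √(2 * N * lam₀), ‖φ r‖ ≤ C) (n : ℕ) :
    ‖(√(2 * N * lam) ^ (N + n + 1))⁻¹ • innerRegionIntegral N lam₀ φ‖
      ≤ C * (2 * lam₁) ^ (-(n : ℝ) / 2) * Real.exp (-(Real.log (lam₁ / lam₀) / 2) * N)
        / (N + 1) := by
  have hlam₁ : 0 < lam₁ := hlam₀.trans_le hlam₀₁
  have hlam_pos : 0 < lam := hlam₁.trans_le hlam
  have hscale : (2 * N * lam) ^ (-(n : ℝ) / 2) ≤ (2 * lam₁) ^ (-(n : ℝ) / 2) := by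
    have hN' : (1 : ℝ) ≤ N := by exact_mod_cast hN
    refine Real.rpow_le_rpow_of_nonpos (by positivity) ?_ ?_
    · nlinarith
    · linarith [n.cast_nonneg (α := ℝ)]
  calc ‖(√(2 * N * lam) ^ (N + n + 1))⁻¹ • innerRegionIntegral N lam₀ φ‖
      ≤ C * (lam₀ / lam) ^ (((N : ℝ) + 1) / 2) * (2 * N * lam) ^ (-(n : ℝ) / 2) / (N + 1) :=
        norm_inv_sqrt_pow_smul_innerRegionIntegral_le hN hlam₀.le hlam_pos hφ n
    _ ≤ C * Real.exp (-(Real.log (lam₁ / lam₀) / 2) * N) * (2 * lam₁) ^ (-(n : ℝ) / 2)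
          / (N + 1) := by
        gcongr
        exact div_rpow_le_exp_neg_log_mul hlam₀ hlam₀₁ hlam N.cast_nonneg
    _ = C * (2 * lam₁) ^ (-(n : ℝ) / 2) * Real.exp (-(Real.log (lam₁ / lam₀) / 2) * N)
          / (N + 1) := by rw [mul_right_comm]

theorem hasDerivAt_const_mul_rpow {a x : ℝ} (hax : a * x ≠ 0) (p : ℝ) :
    HasDerivAt (fun y ↦ (a * y) ^ p) (p / x * (a * x) ^ p) x := by
  obtain ⟨ha, hx⟩ := mul_ne_zero_iff.1 hax
  refine (((hasDerivAt_id x).const_mul a).rpow_const (p := p) (Or.inl hax)).congr_deriv ?_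
  simp only [id, Real.rpow_sub_one hax]
  field_simp

theorem deriv_rpow_smul_eq_smul_inv_sqrt_pow_smul {a x : ℝ} (ha : 0 < a) (hx : 0 < x) (m : ℕ)
    (v : E) :
    deriv (fun y : ℝ ↦ (a * y) ^ (-(m : ℝ) / 2) • v) x
      = (-(m : ℝ) / 2 / x) • (√(a * x) ^ m)⁻¹ • v := by
  have hax : 0 < a * x := mul_pos ha hx
  rw [((hasDerivAt_const_mul_rpow hax.ne' _).smul_const v).deriv,
    inv_sqrt_pow_eq_rpow hax.le, smul_smul]

theorem norm_deriv_rpow_smul_innerRegionIntegral_le_exp {φ : ℝ → E} {C lam₀ lam₁ lam : ℝ}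
    {N : ℕ} (hN : 1 ≤ N) (hlam₀ : 0 < lam₀) (hlam₀₁ : lam₀ ≤ lam₁) (hlam : lam₁ ≤ lam)
    (hC : 0 ≤ C) (hφ : ∀ r ∈ Ioc 0 √(2 * N * lam₀), ‖φ r‖ ≤ C) (n : ℕ) :
    ‖deriv (fun l : ℝ ↦
        (2 * N * l) ^ (-((N : ℝ) + n + 1) / 2) • innerRegionIntegral N lam₀ φ) lam‖
      ≤ (n + 1) / (2 * lam₁) * (C * (2 * lam₁) ^ (-(n : ℝ) / 2))
        * Real.exp (-(Real.log (lam₁ / lam₀) / 2) * N) := by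
  have hN₀ : (0 : ℝ) < N := by exact_mod_cast hN
  have hlam₁ : 0 < lam₁ := hlam₀.trans_le hlam₀₁
  have hlam_pos : 0 < lam := hlam₁.trans_le hlam
  have hm : (N : ℝ) + n + 1 = (N + n + 1 : ℕ) := by push_cast; rfl
  have hfactor : ‖-((N + n + 1 : ℕ) : ℝ) / 2 / lam‖ ≤ (n + 1) / (2 * lam₁) * (N + 1) := by
    rw [neg_div, neg_div, norm_neg, Real.norm_of_nonneg (by positivity), ← hm, div_div,
      div_mul_eq_mul_div]
    gcongr
    nlinarith [mul_nonneg hN₀.le (n.cast_nonneg (α := ℝ))]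
  rw [hm, deriv_rpow_smul_eq_smul_inv_sqrt_pow_smul (by positivity) hlam_pos, norm_smul]
  refine (mul_le_mul hfactor (norm_inv_sqrt_pow_smul_innerRegionIntegral_le_exp hN hlam₀ hlam₀₁
    hlam hC hφ n) (norm_nonneg _) (by positivity)).trans_eq ?_
  field_simp

theorem inner_region_exponentially_small_general [CompleteSpace E] (n : ℕ) {C : ℝ} (hC : 0 < C)
    {lam₀ : ℝ} (hlam₀ : 0 < lam₀) (φ : ℕ → ℝ → E)
    (hint : ∀ N : ℕ, 1 ≤ N → IntervalIntegrable (φ N) volume 0 √(2 * N * lam₀))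
    (hbd : ∀ N : ℕ, 1 ≤ N → ∀ r ∈ Ioc 0 √(2 * N * lam₀), ‖φ N r‖ ≤ C) :
    (∀ N : ℕ, 1 ≤ N → ∀ lam : ℝ, 0 < lam →
      ‖(√(2 * N * lam) ^ (N + n + 1))⁻¹ • innerRegionIntegral N lam₀ (φ N)‖
        ≤ C * (lam₀ / lam) ^ (((N : ℝ) + 1) / 2) * (2 * N * lam) ^ (-(n : ℝ) / 2) / (N + 1)) ∧
    (∀ lam₁ : ℝ, lam₀ < lam₁ →
      ∃ K > (0 : ℝ), ∃ c > (0 : ℝ),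
        (∀ N : ℕ, 1 ≤ N → ∀ lam : ℝ, lam₁ ≤ lam →
          ‖(√(2 * N * lam) ^ (N + n + 1))⁻¹ • innerRegionIntegral N lam₀ (φ N)‖
            ≤ K * Real.exp (-c * N)) ∧
        (∃ K' > (0 : ℝ), ∀ N : ℕ, 1 ≤ N → ∀ lam : ℝ, lam₁ ≤ lam →
          ‖deriv (fun l : ℝ ↦
              (2 * N * l) ^ (-((N : ℝ) + n + 1) / 2) • innerRegionIntegral N lam₀ (φ N)) lam‖
            ≤ K' * Real.exp (-c * N))) := by
  refine ⟨fun N hN lam hlam ↦ norm_inv_sqrt_pow_smul_innerRegionIntegral_le hN hlam₀.le hlam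
    (hbd N hN) n, fun lam₁ hlam₀₁ ↦ ?_⟩
  have hlam₁ : 0 < lam₁ := hlam₀.trans hlam₀₁
  have hrate : 0 < Real.log (lam₁ / lam₀) / 2 :=
    half_pos (Real.log_pos ((one_lt_div hlam₀).2 hlam₀₁))
  refine ⟨C * (2 * lam₁) ^ (-(n : ℝ) / 2), by positivity, Real.log (lam₁ / lam₀) / 2, hrate,
    fun N hN lam hlam ↦ ?_, (n + 1) / (2 * lam₁) * (C * (2 * lam₁) ^ (-(n : ℝ) / 2)),
    by positivity, fun N hN lam hlam ↦ ?_⟩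
  · refine (norm_inv_sqrt_pow_smul_innerRegionIntegral_le_exp hN hlam₀ hlam₀₁.le hlam hC.le
      (hbd N hN) n).trans (div_le_self (by positivity) ?_)
    exact le_add_of_nonneg_left N.cast_nonneg
  · exact norm_deriv_rpow_smul_innerRegionIntegral_le_exp hN hlam₀ hlam₀₁.le hlam hC.le
      (hbd N hN) n

end InnerRegion

/-- exponential smallness of the inner-region contribution, `m = N + n + 1`,
`s̄ = √(2Nλ₀)`, `s = √(2Nλ)`:
(i) `|s^{-m} ∫_0^{s̄} r^N φ(r) dr| ≤ C (λ₀/λ)^{(N+1)/2} (2Nλ)^{-n/2} / (N+1)`;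
(ii) consequently, for fixed `λ₀ < λ₁ ≤ T` this quantity, and the `λ`-derivative of
`λ ↦ (2Nλ)^{-m/2} ∫_0^{s̄} r^N φ(r) dr`, are bounded by `K e^{-cN}` uniformly for
`λ ∈ [λ₁, T]`. -/
theorem inner_region_exponentially_small
    (n : ℕ) (hn : 1 ≤ n) (C : ℝ) (hC : 0 < C)
    (lam₀ : ℝ) (hlam₀ : 0 < lam₀)
    (φ : ℝ → ℝ)
    (hint : ∀ b : ℝ, 0 ≤ b → IntervalIntegrable φ MeasureTheory.volume 0 b)
    (hbd : ∀ r : ℝ, 0 ≤ r → |φ r| ≤ C) :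
    (∀ N : ℕ, 1 ≤ N → ∀ lam : ℝ, lam₀ < lam →
      |(Real.sqrt (2 * N * lam) ^ (N + n + 1))⁻¹ *
          (∫ r in (0 : ℝ)..(Real.sqrt (2 * N * lam₀)), r ^ N * φ r)|
        ≤ C * (lam₀ / lam) ^ (((N : ℝ) + 1) / 2) * (2 * N * lam) ^ (-(n : ℝ) / 2) /
            ((N : ℝ) + 1)) ∧
    (∀ lam₁ T : ℝ, lam₀ < lam₁ → lam₁ ≤ T →
      ∃ K > (0 : ℝ), ∃ c > (0 : ℝ),
        (∀ N : ℕ, 1 ≤ N → ∀ lam : ℝ, lam₁ ≤ lam → lam ≤ T →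
          |(Real.sqrt (2 * N * lam) ^ (N + n + 1))⁻¹ *
              (∫ r in (0 : ℝ)..(Real.sqrt (2 * N * lam₀)), r ^ N * φ r)|
            ≤ K * Real.exp (-c * N)) ∧
        (∃ K' > (0 : ℝ), ∀ N : ℕ, 1 ≤ N → ∀ lam : ℝ, lam₁ ≤ lam → lam ≤ T →
          |deriv (fun l : ℝ =>
              (2 * N * l) ^ (-((N : ℝ) + n + 1) / 2) *
                (∫ r in (0 : ℝ)..(Real.sqrt (2 * N * lam₀)), r ^ N * φ r)) lam|
            ≤ K' * Real.exp (-c * N))) := by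
  obtain ⟨hbound, hexp⟩ := inner_region_exponentially_small_general n hC hlam₀ (fun _ ↦ φ)
    (fun _ _ ↦ hint _ (Real.sqrt_nonneg _)) (fun _ _ r hr ↦ hbd r hr.1.le)
  refine ⟨fun N hN lam hlam ↦ hbound N hN lam (hlam₀.trans hlam), fun lam₁ T hlam₁ _ ↦ ?_⟩
  obtain ⟨K, hK, c, hc, hvalue, K', hK', hderiv⟩ := hexp lam₁ hlam₁
  exact ⟨K, hK, c, hc, fun N hN lam hlam _ ↦ hvalue N hN lam hlam,
    K', hK', fun N hN lam hlam _ ↦ hderiv N hN lam hlam⟩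
end
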